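/- Let Ω ⊆ ℝ³ be open and α > −1, and assume (QPD). There exists a constant c > 0, depending only on α and c₀, such that: if ρ > 0 and u ∈ H̊¹(Ω;ℝ³) satisfies Lu = 0 on Ω∩B_{2ρ}, then for every y ∈ Ω∩B_ρ, |u(y)|² + ∫_{Ω∩B_ρ} |Du(x)|² |x−y|^{−1} dx ≤ c · m_ρ(u). -/

import Mathlib

/-!
The proof localizes (QPD) by a cutoff and controls the resulting commutator on the annulus `S_ρ`.

Write `α = s + t` with `s = max α 0` and `t = min α 0`. Integrating by parts, `L` has the energy
density `bf s t (Du) (Dφ) = ⟨Du + s (div u) I + t (Du)ᵀ, Dφ⟩`; this choice of density is pointwise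
coercive, `bf s t P P ≥ (1 + t) |P|²`, because `s ≥ 0` and `-1 < t ≤ 0` (`bf_coercive`).

Since `u` is smooth near `y ∈ Ω`, there are test fields `wₙ → u` in `H¹(Ω)` that equal `u` on a
small ball around `y` (`exists_approx`). Let `η` be a cutoff that is `1` on `B_{5ρ/4}` and has
support in `B_{2ρ}`. (QPD) applied to `η wₙ` bounds `½ |u(y)|² + c₀ ∫ |D(η wₙ)|² |x - y|⁻¹` by
`∫ L(η wₙ) · Φ(x - y) η wₙ`. As `L(η wₙ) = Lu = 0` near `y`, the kernel `Φ(x - y)` may be replaced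
there by a smooth one, `K`. Moving `η` from one factor to the other leaves
`∫ bf s t (Dwₙ) (D(η² K wₙ))` plus commutator terms that live on `supp Dη`, where
`5ρ/4 ≤ |x| ≤ 7ρ/4` and hence `|x - y|` is comparable with `ρ`; they are bounded by
`ρ⁻³ ∫_{S_ρ} |wₙ|² + ρ⁻¹ ∫ η₂² |Dwₙ|²` with a second cutoff `η₂` supported in `S_ρ`
(`lameEnergy_le`). The gradient term is absorbed by a Caccioppoli inequality whose remainder is
`∫ bf s t (Dwₙ) (D(η₂² wₙ))` (`caccioppoli`).

Both energies `∫ bf s t (Dwₙ) (D(M wₙ))` with `M` supported in `B_{2ρ}` tend to `0`: replacing the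
first `wₙ` by `u` gives zero by the equation, at a cost controlled by the `H¹` distance
(`tendsto_energy`). The weight `|x - y|⁻¹` is harmless in the passage from `wₙ` to `u`, since
the two fields agree near `y` (`weighted_integral_le`).
-/

open MeasureTheory Metric Real Filter

noncomputable section

/-- `ℝ³` as Euclidean space. -/
abbrev E3 : Type := EuclideanSpace ℝ (Fin 3)

/-- Partial derivative `∂ᵢ f` on `ℝ³`. -/
def pd (i : Fin 3) (f : E3 → ℝ) (x : E3) : ℝ :=
  fderiv ℝ f x (EuclideanSpace.single i 1)

/-- Laplacian on `ℝ³`. -/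
def lap (f : E3 → ℝ) (x : E3) : ℝ := ∑ i, pd i (pd i f) x

/-- Divergence of a vector field on `ℝ³`. -/
def divg (u : E3 → Fin 3 → ℝ) (x : E3) : ℝ := ∑ k, pd k (fun y => u y k) x

/-- The 3D Lamé operator `(Lu)ᵢ = -Δuᵢ - α ∂ᵢ (div u)`. -/
def lame (α : ℝ) (u : E3 → Fin 3 → ℝ) (x : E3) (i : Fin 3) : ℝ :=
  - lap (fun y => u y i) x - α * pd i (divg u) x

/-- The constant `c_α = (α+2)/(8π(α+1))`. -/
def cA (α : ℝ) : ℝ := (α + 2) / (8 * Real.pi * (α + 1))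

/-- The fundamental matrix `Φ` of the 3D Lamé system:
`Φ_ij(x) = c_α |x|⁻¹ (δ_ij + (α/(α+2)) xᵢxⱼ/|x|²)`. -/
def Phi (α : ℝ) (x : E3) (i j : Fin 3) : ℝ :=
  cA α * ‖x‖⁻¹ * ((if i = j then (1 : ℝ) else 0) + (α / (α + 2)) * (x i * x j) / ‖x‖ ^ 2)

/-- `u ∈ C₀^∞(U; ℝ³)`: smooth, compactly supported, with support inside `U`. -/
def IsTestOn (U : Set E3) (u : E3 → Fin 3 → ℝ) : Prop :=
  ContDiff ℝ (⊤ : ℕ∞) u ∧ HasCompactSupport u ∧ tsupport u ⊆ U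

/-- `∫_{ℝ³} (Lu)·(Φ(·-y) u) dx`. -/
def lameEnergy (α : ℝ) (u : E3 → Fin 3 → ℝ) (y : E3) : ℝ :=
  ∫ x : E3, ∑ i, ∑ j, lame α u x i * Phi α (x - y) i j * u x j

/-- (QPD): quantitative weighted positive definiteness of the Lamé system with weight `Φ`,
with constant `c₀`. -/
def QPDhyp (α c₀ : ℝ) : Prop :=
  ∀ u : E3 → Fin 3 → ℝ, IsTestOn Set.univ u → ∀ y : E3,
    (1 / 2) * (∑ i, (u y i) ^ 2) +
      c₀ * ∫ x : E3, (∑ i, ∑ k, (pd k (fun z => u z i) x) ^ 2) * ‖x - y‖⁻¹ ≤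
    lameEnergy α u y

/-- `u ∈ H̊¹(Ω; ℝ³)`: `u` is smooth on `Ω`, `∫_Ω (|u|² + |Du|²) < ∞`, and `u` is
approximated in this norm by test fields supported in `Ω`. -/
def MemH10 (Ω : Set E3) (u : E3 → Fin 3 → ℝ) : Prop :=
  ContDiffOn ℝ (⊤ : ℕ∞) u Ω ∧
  IntegrableOn (fun x => (∑ i, (u x i) ^ 2) +
    ∑ i, ∑ k, (pd k (fun z => u z i) x) ^ 2) Ω volume ∧
  ∃ un : ℕ → E3 → Fin 3 → ℝ, (∀ n, IsTestOn Ω (un n)) ∧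
    Tendsto (fun n => ∫ x in Ω, ((∑ i, (u x i - un n x i) ^ 2) +
      ∑ i, ∑ k, (pd k (fun z => u z i - un n z i) x) ^ 2)) atTop (nhds 0)

/-- `m_ρ(u) = ρ⁻³ ∫_{Ω ∩ S_ρ} |u|² dx`, where `S_ρ = {ρ < |x| < 2ρ}`. -/
def mRho (Ω : Set E3) (ρ : ℝ) (u : E3 → Fin 3 → ℝ) : ℝ :=
  (ρ ^ 3)⁻¹ * ∫ x in Ω ∩ {x : E3 | ρ < ‖x‖ ∧ ‖x‖ < 2 * ρ}, ∑ i, (u x i) ^ 2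

/-- `M_ρ(u) = ρ⁻³ ∫_{Ω ∩ B_ρ} |u|² dx`. -/
def MRho (Ω : Set E3) (ρ : ℝ) (u : E3 → Fin 3 → ℝ) : ℝ :=
  (ρ ^ 3)⁻¹ * ∫ x in Ω ∩ ball (0 : E3) ρ, ∑ i, (u x i) ^ 2

/-! ### Pointwise algebra of the energy form -/

/-- Squared Euclidean norm of a vector. -/
def nv (a : Fin 3 → ℝ) : ℝ := ∑ i, a i ^ 2

/-- Squared Frobenius norm of a matrix. -/
def nm (P : Fin 3 → Fin 3 → ℝ) : ℝ := ∑ i, ∑ k, P i k ^ 2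

/-- The Jacobian matrix `(∂ₖ uᵢ)ᵢₖ`. -/
def grad (u : E3 → Fin 3 → ℝ) (x : E3) (i k : Fin 3) : ℝ := pd k (fun z => u z i) x

/-- The stress matrix `P + s (tr P) I + t Pᵀ`. -/
def stress (s t : ℝ) (P : Fin 3 → Fin 3 → ℝ) (i k : Fin 3) : ℝ :=
  P i k + (if i = k then s * ∑ j, P j j else 0) + t * P k i

/-- The bilinear form `⟨P + s (tr P) I + t Pᵀ, Q⟩`. For `s + t = α` it is an energy density of
the Lamé operator. -/
def bf (s t : ℝ) (P Q : Fin 3 → Fin 3 → ℝ) : ℝ := ∑ i, ∑ k, stress s t P i k * Q i k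

lemma nv_nonneg (a : Fin 3 → ℝ) : 0 ≤ nv a := Finset.sum_nonneg fun _ _ => sq_nonneg _

lemma nm_nonneg (P : Fin 3 → Fin 3 → ℝ) : 0 ≤ nm P :=
  Finset.sum_nonneg fun _ _ => Finset.sum_nonneg fun _ _ => sq_nonneg _

lemma nv_le_two (a b : Fin 3 → ℝ) : nv a ≤ 2 * nv b + 2 * nv (fun i => b i - a i) := by
  simp only [nv, Fin.sum_univ_three]
  nlinarith [sq_nonneg (a 0 - 2 * b 0), sq_nonneg (a 1 - 2 * b 1), sq_nonneg (a 2 - 2 * b 2)]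

lemma nm_le_two (P Q : Fin 3 → Fin 3 → ℝ) :
    nm P ≤ 2 * nm Q + 2 * nm (fun i k => Q i k - P i k) := by
  have h : ∀ i, ∑ k, P i k ^ 2 ≤ 2 * ∑ k, Q i k ^ 2 + 2 * ∑ k, (Q i k - P i k) ^ 2 :=
    fun i => nv_le_two (P i) (Q i)
  have := Finset.sum_le_sum (s := Finset.univ) fun i _ => h i
  simpa only [nm, Finset.sum_add_distrib, Finset.mul_sum] using this

/-- Pointwise coercivity. The trace term is harmless for `s ≥ 0`, and `∑ Pᵢₖ Pₖᵢ ≤ |P|²`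
controls the transpose term for `t ≤ 0`. -/
lemma bf_coercive {s t : ℝ} (hs : 0 ≤ s) (ht : t ≤ 0) (P : Fin 3 → Fin 3 → ℝ) :
    (1 + t) * nm P ≤ bf s t P P := by
  have h1 : bf s t P P = nm P + s * (∑ j, P j j) ^ 2 + t * ∑ i, ∑ k, P k i * P i k := by
    simp [bf, nm, stress, Fin.sum_univ_three]; ring
  have h2 : ∑ i, ∑ k, P k i * P i k ≤ nm P := by
    simp only [nm, Fin.sum_univ_three]
    nlinarith [sq_nonneg (P 0 1 - P 1 0), sq_nonneg (P 0 2 - P 2 0), sq_nonneg (P 1 2 - P 2 1)]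
  have h3 : 0 ≤ s * (∑ j, P j j) ^ 2 := by positivity
  rw [h1]
  nlinarith

/-- The constant in the continuity estimate `abs_bf_le` of the form `bf`. -/
def cB (s t : ℝ) : ℝ := 3 * (1 + 9 * s ^ 2 + t ^ 2)

lemma cB_pos (s t : ℝ) : 0 < cB s t := by unfold cB; positivity

lemma nm_stress_le (s t : ℝ) (P : Fin 3 → Fin 3 → ℝ) :
    nm (stress s t P) ≤ cB s t * nm P := by
  have h : ∀ i k, stress s t P i k ^ 2 ≤
      3 * (P i k ^ 2 + (if i = k then s ^ 2 * (3 * nm P) else 0) + t ^ 2 * P k i ^ 2) := by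
    intro i k
    have htr : (∑ j, P j j) ^ 2 ≤ 3 * nm P := by
      simp only [nm, Fin.sum_univ_three]
      nlinarith [sq_nonneg (P 0 0 - P 1 1), sq_nonneg (P 0 0 - P 2 2), sq_nonneg (P 1 1 - P 2 2),
        sq_nonneg (P 0 1), sq_nonneg (P 1 0), sq_nonneg (P 0 2), sq_nonneg (P 2 0),
        sq_nonneg (P 1 2), sq_nonneg (P 2 1)]
    have hst : (s * ∑ j, P j j) ^ 2 ≤ s ^ 2 * (3 * nm P) := by
      rw [mul_pow]; gcongr
    have key : ∀ a b c : ℝ, (a + b + c) ^ 2 ≤ 3 * (a ^ 2 + b ^ 2 + c ^ 2) := fun a b c => by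
      nlinarith [sq_nonneg (a - b), sq_nonneg (a - c), sq_nonneg (b - c)]
    unfold stress
    split_ifs
    · have := key (P i k) (s * ∑ j, P j j) (t * P k i)
      nlinarith
    · have := key (P i k) 0 (t * P k i)
      nlinarith
  have h2 := Finset.sum_le_sum (s := Finset.univ) fun i _ =>
    Finset.sum_le_sum (s := Finset.univ) fun k _ => h i k
  refine le_trans h2 (le_of_eq ?_)
  simp [nm, cB, Fin.sum_univ_three]
  ring

lemma abs_bf_le (s t : ℝ) (P Q : Fin 3 → Fin 3 → ℝ) {l : ℝ} (hl : 0 < l) :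
    |bf s t P Q| ≤ cB s t * (l * nm P + l⁻¹ * nm Q) := by
  have h : ∀ a b : ℝ, |a * b| ≤ l * a ^ 2 + l⁻¹ * b ^ 2 := by
    intro a b
    have e : l * a ^ 2 + l⁻¹ * b ^ 2 = l⁻¹ * ((l * a) ^ 2 + b ^ 2) := by field_simp
    have e2 : |a * b| = l⁻¹ * (|l * a| * |b|) := by
      rw [← abs_mul, mul_assoc l, abs_mul l, abs_of_pos hl]; field_simp
    rw [e, e2]
    gcongr
    rw [← sq_abs (l * a), ← sq_abs b]
    nlinarith [sq_nonneg (|l * a| - |b|), abs_nonneg (l * a), abs_nonneg b,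
      mul_nonneg (abs_nonneg (l * a)) (abs_nonneg b)]
  have h1 : |bf s t P Q| ≤ l * nm (stress s t P) + l⁻¹ * nm Q := by
    unfold bf nm
    refine (Finset.abs_sum_le_sum_abs _ _).trans ?_
    rw [Finset.mul_sum, Finset.mul_sum, ← Finset.sum_add_distrib]
    refine Finset.sum_le_sum fun i _ => (Finset.abs_sum_le_sum_abs _ _).trans ?_
    rw [Finset.mul_sum, Finset.mul_sum, ← Finset.sum_add_distrib]
    exact Finset.sum_le_sum fun k _ => h _ _
  have h2 := nm_stress_le s t P
  have h3 : 1 ≤ cB s t := by unfold cB; nlinarith [sq_nonneg s, sq_nonneg t]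
  have h4 := mul_le_mul_of_nonneg_left h2 hl.le
  have h5 : 0 ≤ l⁻¹ * nm Q := mul_nonneg (by positivity) (nm_nonneg Q)
  nlinarith

/-! ### Partial derivatives -/

lemma pd_mul (k : Fin 3) {f g : E3 → ℝ} {x : E3} (hf : DifferentiableAt ℝ f x)
    (hg : DifferentiableAt ℝ g x) :
    pd k (fun z => f z * g z) x = pd k f x * g x + f x * pd k g x := by
  simp only [pd]
  rw [fderiv_fun_mul hf hg]
  simp; ring

lemma pd_add (k : Fin 3) {f g : E3 → ℝ} {x : E3} (hf : DifferentiableAt ℝ f x)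
    (hg : DifferentiableAt ℝ g x) :
    pd k (fun z => f z + g z) x = pd k f x + pd k g x := by
  simp only [pd]
  rw [fderiv_fun_add hf hg]; simp

lemma pd_sub (k : Fin 3) {f g : E3 → ℝ} {x : E3} (hf : DifferentiableAt ℝ f x)
    (hg : DifferentiableAt ℝ g x) :
    pd k (fun z => f z - g z) x = pd k f x - pd k g x := by
  simp only [pd]
  rw [fderiv_fun_sub hf hg]; simp

lemma pd_const_mul (k : Fin 3) (c : ℝ) {f : E3 → ℝ} {x : E3} (hf : DifferentiableAt ℝ f x) :
    pd k (fun z => c * f z) x = c * pd k f x := by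
  simp only [pd]
  rw [fderiv_const_mul hf]; simp

lemma pd_sum (k : Fin 3) {f : Fin 3 → E3 → ℝ} {x : E3} (hf : ∀ j, DifferentiableAt ℝ (f j) x) :
    pd k (fun z => ∑ j, f j z) x = ∑ j, pd k (f j) x := by
  simp only [pd]
  rw [fderiv_fun_sum fun j _ => hf j]; simp

lemma pd_congr (k : Fin 3) {f g : E3 → ℝ} {x : E3} (h : f =ᶠ[nhds x] g) :
    pd k f x = pd k g x := by
  simp only [pd, h.fderiv_eq]

lemma pd_congr' (k : Fin 3) {f g : E3 → ℝ} {x : E3} (h : f =ᶠ[nhds x] g) :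
    pd k f =ᶠ[nhds x] pd k g :=
  h.eventuallyEq_nhds.mono fun _ hz => pd_congr k hz

lemma pd_smooth (k : Fin 3) {f : E3 → ℝ} {x : E3} (hf : ContDiffAt ℝ (⊤ : ℕ∞) f x) :
    ContDiffAt ℝ (⊤ : ℕ∞) (pd k f) x := by
  have := hf.fderiv_right (m := (⊤ : ℕ∞)) (by norm_cast)
  exact this.clm_apply contDiffAt_const

lemma ContDiffAt.diff {f : E3 → ℝ} {x : E3} (hf : ContDiffAt ℝ (⊤ : ℕ∞) f x) :
    DifferentiableAt ℝ f x := hf.differentiableAt (by norm_cast)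

lemma pd_comm (i k : Fin 3) {f : E3 → ℝ} {x : E3} (hf : ContDiffAt ℝ (⊤ : ℕ∞) f x) :
    pd i (pd k f) x = pd k (pd i f) x := by
  have hs : IsSymmSndFDerivAt ℝ f x := hf.isSymmSndFDerivAt
    (by simpa using (WithTop.coe_le_coe.2 le_top : ((2 : ℕ∞) : WithTop ℕ∞) ≤ (⊤ : ℕ∞)))
  have hd : DifferentiableAt ℝ (fderiv ℝ f) x :=
    (hf.fderiv_right (m := (⊤ : ℕ∞)) (by norm_cast)).differentiableAt (by norm_cast)
  have e : ∀ a b : Fin 3, pd a (pd b f) x =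
      fderiv ℝ (fderiv ℝ f) x (EuclideanSpace.single a 1) (EuclideanSpace.single b 1) := by
    intro a b
    have : pd b f = fun z => fderiv ℝ f z (EuclideanSpace.single b 1) := rfl
    rw [pd, this, fderiv_clm_apply hd (differentiableAt_const _)]
    simp
  rw [e, e, hs.eq]

/-! ### Scalar test functions and the weak formulation -/

/-- `f ∈ C₀^∞(Ω)`. -/
def TestS (Ω : Set E3) (f : E3 → ℝ) : Prop :=
  ContDiff ℝ (⊤ : ℕ∞) f ∧ HasCompactSupport f ∧ tsupport f ⊆ Ω

lemma IsTestOn.comp {Ω : Set E3} {φ : E3 → Fin 3 → ℝ} (h : IsTestOn Ω φ) (i : Fin 3) :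
    TestS Ω (fun z => φ z i) := by
  have hs : tsupport (fun z => φ z i) ⊆ tsupport φ :=
    closure_mono fun z hz hz' => hz (by simp [hz'])
  exact ⟨contDiff_pi.1 h.1 i, h.2.1.of_isClosed_subset (isClosed_tsupport _) hs, hs.trans h.2.2⟩

lemma IsTestOn.of_comp {Ω : Set E3} {φ : E3 → Fin 3 → ℝ}
    (h : ∀ i, TestS Ω (fun z => φ z i)) : IsTestOn Ω φ := by
  have hs : tsupport φ ⊆ ⋃ i, tsupport (fun z => φ z i) := by
    refine closure_minimal ?_ (isClosed_iUnion_of_finite fun i => isClosed_tsupport _)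
    intro z hz
    obtain ⟨i, hi⟩ : ∃ i, φ z i ≠ 0 := by
      by_contra! hc
      exact hz (funext hc)
    exact Set.mem_iUnion.2 ⟨i, subset_tsupport _ hi⟩
  exact ⟨contDiff_pi.2 fun i => (h i).1,
    (isCompact_iUnion fun i => (h i).2.1).of_isClosed_subset (isClosed_tsupport _) hs,
    hs.trans (Set.iUnion_subset fun i => (h i).2.2)⟩

namespace TestS

variable {Ω : Set E3} {f g : E3 → ℝ}

lemma sm (h : TestS Ω f) (x : E3) : ContDiffAt ℝ (⊤ : ℕ∞) f x := h.1.contDiffAt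

lemma integrable (h : TestS Ω f) : Integrable f :=
  h.1.continuous.integrable_of_hasCompactSupport h.2.1

lemma zero_off (h : TestS Ω f) {x : E3} (hx : x ∉ Ω) : f x = 0 :=
  image_eq_zero_of_notMem_tsupport fun hx' => hx (h.2.2 hx')

lemma mono (h : TestS Ω f) {Ω' : Set E3} (hs : Ω ⊆ Ω') : TestS Ω' f :=
  ⟨h.1, h.2.1, h.2.2.trans hs⟩

/-- A product of a test function on `Ω` with a function that is smooth only on `Ω` is again a
test function on `Ω`. -/
lemma mul_left (h : TestS Ω f) (hg : ∀ x ∈ Ω, ContDiffAt ℝ (⊤ : ℕ∞) g x) :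
    TestS Ω (fun x => g x * f x) := by
  have hs : tsupport (fun x => g x * f x) ⊆ tsupport f :=
    closure_mono fun z hz hz' => hz (by simp [hz'])
  refine ⟨contDiff_iff_contDiffAt.2 fun x => ?_,
    h.2.1.of_isClosed_subset (isClosed_tsupport _) hs, hs.trans h.2.2⟩
  by_cases hx : x ∈ tsupport f
  · exact (hg x (h.2.2 hx)).mul (h.sm x)
  · have : (fun x => g x * f x) =ᶠ[nhds x] fun _ => 0 := by
      filter_upwards [(isClosed_tsupport f).isOpen_compl.mem_nhds hx] with z hz
      rw [image_eq_zero_of_notMem_tsupport hz, mul_zero]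
    exact contDiffAt_const.congr_of_eventuallyEq this

lemma pd (h : TestS Ω f) (k : Fin 3) : TestS Ω (pd k f) := by
  have hs : tsupport (_root_.pd k f) ⊆ tsupport f := by
    refine closure_minimal ?_ (isClosed_tsupport f)
    intro z hz
    by_contra hc
    exact hz (by simp [_root_.pd, fderiv_of_notMem_tsupport ℝ hc])
  exact ⟨contDiff_iff_contDiffAt.2 fun x => pd_smooth k (h.sm x),
    h.2.1.of_isClosed_subset (isClosed_tsupport _) hs, hs.trans h.2.2⟩

lemma add (h : TestS Ω f) (h' : TestS Ω g) : TestS Ω (fun x => f x + g x) := by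
  have hs : tsupport (fun x => f x + g x) ⊆ tsupport f ∪ tsupport g := tsupport_add f g
  exact ⟨h.1.add h'.1, (h.2.1.union h'.2.1).of_isClosed_subset (isClosed_tsupport _) hs,
    hs.trans (Set.union_subset h.2.2 h'.2.2)⟩

lemma zero : TestS Ω (fun _ => 0) := by
  refine ⟨contDiff_const, ?_, ?_⟩
  · exact HasCompactSupport.zero
  · have : tsupport (fun _ : E3 => (0 : ℝ)) = ∅ := by
      rw [tsupport_eq_empty_iff]; rfl
    rw [this]; exact Set.empty_subset _

lemma sum {ι : Type*} (s : Finset ι) {F : ι → E3 → ℝ} (h : ∀ i, TestS Ω (F i)) :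
    TestS Ω (fun x => ∑ i ∈ s, F i x) := by
  classical
  induction s using Finset.induction_on with
  | empty => simpa using zero
  | insert a s ha ih =>
    simp only [Finset.sum_insert ha]
    exact (h a).add ih

lemma const_mul (h : TestS Ω f) (c : ℝ) : TestS Ω (fun x => c * f x) :=
  h.mul_left fun _ _ => contDiffAt_const

lemma sub (h : TestS Ω f) (h' : TestS Ω g) : TestS Ω (fun x => f x - g x) := by
  simpa [sub_eq_add_neg] using h.add (h'.const_mul (-1))

lemma mul (h : TestS Ω f) (h' : TestS Ω g) : TestS Ω (fun x => f x * g x) :=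
  h'.mul_left fun x _ => h.sm x

end TestS

lemma smooth_stress {s t : ℝ} {v : E3 → Fin 3 → ℝ} {x : E3}
    (hv : ∀ i, ContDiffAt ℝ (⊤ : ℕ∞) (fun z => v z i) x) (i k : Fin 3) :
    ContDiffAt ℝ (⊤ : ℕ∞) (fun z => stress s t (grad v z) i k) x := by
  have hg : ∀ i k, ContDiffAt ℝ (⊤ : ℕ∞) (fun z => grad v z i k) x := fun i k =>
    pd_smooth k (hv i)
  unfold stress
  refine ((hg i k).add ?_).add (contDiffAt_const.mul (hg k i))
  split_ifs
  · exact contDiffAt_const.mul (ContDiffAt.sum fun j _ => hg j j)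
  · exact contDiffAt_const

/-- The stress tensor has divergence `-L v`. The coefficients `s` and `t` contribute the same
second-order operator `∇ div` because second derivatives commute. -/
lemma div_stress {s t : ℝ} {v : E3 → Fin 3 → ℝ} {x : E3}
    (hv : ∀ i, ContDiffAt ℝ (⊤ : ℕ∞) (fun z => v z i) x) (i : Fin 3) :
    - ∑ k, pd k (fun z => stress s t (grad v z) i k) x = lame (s + t) v x i := by
  have hd : ∀ i k, DifferentiableAt ℝ (pd k (fun z => v z i)) x := fun i k =>
    (pd_smooth k (hv i)).diff
  have hdiv : ∀ i, pd i (divg v) x = ∑ k, pd k (pd i (fun z => v z k)) x := by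
    intro i
    have : divg v = fun z => ∑ k, pd k (fun y => v y k) z := rfl
    rw [this, pd_sum i fun j => hd j j]
    exact Finset.sum_congr rfl fun k _ => pd_comm _ _ (hv k)
  have hS : ∀ k, pd k (fun z => stress s t (grad v z) i k) x =
      pd k (pd k (fun z => v z i)) x + (if i = k then s * pd i (divg v) x else 0)
        + t * pd k (pd i (fun z => v z k)) x := by
    intro k
    have h3 : DifferentiableAt ℝ (fun z => t * pd i (fun z => v z k) z) x :=
      (hd k i).const_mul t
    by_cases hik : i = k
    · subst hik
      have h2 : DifferentiableAt ℝ (fun z => ∑ j, pd j (fun y => v y j) z) x :=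
        DifferentiableAt.fun_sum fun j _ => hd j j
      simp only [stress, grad, if_true]
      rw [pd_add _ ((hd i i).fun_add (h2.const_mul s)) h3, pd_add _ (hd i i) (h2.const_mul s),
        pd_const_mul _ _ h2, pd_const_mul _ _ (hd i i)]
      rfl
    · simp only [stress, grad, if_neg hik, add_zero]
      rw [pd_add _ (hd i k) h3, pd_const_mul _ _ (hd k i)]
  simp only [hS, Finset.sum_add_distrib, Finset.sum_ite_eq, Finset.mem_univ, if_true,
    ← Finset.mul_sum, ← hdiv, lame, lap]
  ring

/-- Weak formulation: `∫ b(Dv, Dφ) = ∫ L v · φ` for `φ` a test field on `Ω` and `v` smooth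
on `Ω`. The integrands vanish off `Ω`, so the integrals may run over the whole space. -/
lemma weak_form {Ω : Set E3} (s t : ℝ) {v φ : E3 → Fin 3 → ℝ}
    (hv : ∀ x ∈ Ω, ∀ i, ContDiffAt ℝ (⊤ : ℕ∞) (fun z => v z i) x) (hφ : IsTestOn Ω φ) :
    ∫ x, bf s t (grad v x) (grad φ x) = ∫ x, ∑ i, lame (s + t) v x i * φ x i := by
  have hT := hφ.comp
  have hS : ∀ i k, ∀ x ∈ Ω, ContDiffAt ℝ (⊤ : ℕ∞) (fun z => stress s t (grad v z) i k) x :=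
    fun i k x hx => smooth_stress (hv x hx) i k
  have h1 : ∀ i k, TestS Ω (fun x => stress s t (grad v x) i k * grad φ x i k) := fun i k =>
    ((hT i).pd k).mul_left (hS i k)
  have h2 : ∀ i k, TestS Ω (fun x => pd k (fun z => stress s t (grad v z) i k) x * φ x i) :=
    fun i k => (hT i).mul_left fun x hx => pd_smooth k (hS i k x hx)
  have hibp : ∀ i k, ∫ x, stress s t (grad v x) i k * grad φ x i k =
      - ∫ x, pd k (fun z => stress s t (grad v z) i k) x * φ x i := by
    intro i k
    exact integral_mul_fderiv_eq_neg_fderiv_mul_of_integrable (h2 i k).integrable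
      (h1 i k).integrable ((hT i).mul_left (hS i k)).integrable
      (fun x hx => (hS i k x ((hT i).2.2 hx)).diff) (fun x _ => ((hT i).sm x).diff)
  calc ∫ x, bf s t (grad v x) (grad φ x)
      = ∑ i, ∑ k, ∫ x, stress s t (grad v x) i k * grad φ x i k := by
        simp only [bf]
        rw [integral_finsetSum _ fun i _ => (TestS.sum _ (h1 i)).integrable]
        exact Finset.sum_congr rfl fun i _ => integral_finsetSum _ fun k _ => (h1 i k).integrable
    _ = ∑ i, ∑ k, - ∫ x, pd k (fun z => stress s t (grad v z) i k) x * φ x i := by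
        simp only [hibp]
    _ = ∫ x, ∑ i, ∑ k, -1 * (pd k (fun z => stress s t (grad v z) i k) x * φ x i) := by
        rw [integral_finsetSum _ fun i _ => (TestS.sum _ fun k => (h2 i k).const_mul (-1)).integrable]
        refine Finset.sum_congr rfl fun i _ => ?_
        rw [integral_finsetSum _ fun k _ => ((h2 i k).const_mul (-1)).integrable]
        refine Finset.sum_congr rfl fun k _ => ?_
        rw [integral_const_mul]; ring
    _ = ∫ x, ∑ i, lame (s + t) v x i * φ x i := by
        congr 1; ext x
        refine Finset.sum_congr rfl fun i _ => ?_
        by_cases hx : x ∈ Ω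
        · rw [← div_stress (hv x hx) i, ← Finset.mul_sum, ← Finset.sum_mul]; ring
        · simp [(hT i).zero_off hx]

/-! ### Matrix multipliers -/

/-- The product `M w` of a matrix field and a vector field. -/
def mulV (M : E3 → Fin 3 → Fin 3 → ℝ) (w : E3 → Fin 3 → ℝ) (x : E3) (i : Fin 3) : ℝ :=
  ∑ j, M x i j * w x j

lemma grad_mulV {M : E3 → Fin 3 → Fin 3 → ℝ} {w : E3 → Fin 3 → ℝ} {x : E3}
    (hM : ∀ i j, DifferentiableAt ℝ (fun z => M z i j) x)
    (hw : ∀ j, DifferentiableAt ℝ (fun z => w z j) x) (i k : Fin 3) :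
    grad (mulV M w) x i k =
      ∑ j, (pd k (fun z => M z i j) x * w x j + M x i j * grad w x j k) := by
  unfold grad mulV
  rw [pd_sum k fun j => (hM i j).fun_mul (hw j)]
  exact Finset.sum_congr rfl fun j _ => pd_mul k (hM i j) (hw j)

lemma nm_grad_mulV_le {M : E3 → Fin 3 → Fin 3 → ℝ} {w : E3 → Fin 3 → ℝ} {x : E3}
    (hM : ∀ i j, DifferentiableAt ℝ (fun z => M z i j) x)
    (hw : ∀ j, DifferentiableAt ℝ (fun z => w z j) x) {m0 m1 : ℝ}
    (h0 : ∀ i j, |M x i j| ≤ m0) (h1 : ∀ i j k, |pd k (fun z => M z i j) x| ≤ m1) :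
    nm (grad (mulV M w) x) ≤ 54 * (m1 ^ 2 * nv (w x) + m0 ^ 2 * nm (grad w x)) := by
  have key : ∀ i k, grad (mulV M w) x i k ^ 2 ≤
      6 * (m1 ^ 2 * nv (w x) + m0 ^ 2 * ∑ j, grad w x j k ^ 2) := by
    intro i k
    rw [grad_mulV hM hw]
    have hb : ∀ j, (pd k (fun z => M z i j) x * w x j) ^ 2 ≤ m1 ^ 2 * w x j ^ 2 := fun j => by
      rw [mul_pow]
      exact mul_le_mul_of_nonneg_right (sq_le_sq' (abs_le.1 (h1 i j k)).1 (abs_le.1 (h1 i j k)).2)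
        (sq_nonneg _)
    have hc : ∀ j, (M x i j * grad w x j k) ^ 2 ≤ m0 ^ 2 * grad w x j k ^ 2 := fun j => by
      rw [mul_pow]
      exact mul_le_mul_of_nonneg_right (sq_le_sq' (abs_le.1 (h0 i j)).1 (abs_le.1 (h0 i j)).2)
        (sq_nonneg _)
    have hs : (∑ j, (pd k (fun z => M z i j) x * w x j + M x i j * grad w x j k)) ^ 2 ≤
        3 * ∑ j, (pd k (fun z => M z i j) x * w x j + M x i j * grad w x j k) ^ 2 := by
      have := sq_sum_le_card_mul_sum_sq (s := (Finset.univ : Finset (Fin 3)))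
        (f := fun j => pd k (fun z => M z i j) x * w x j + M x i j * grad w x j k)
      simpa using this
    refine hs.trans ?_
    have h4 : ∀ j, (pd k (fun z => M z i j) x * w x j + M x i j * grad w x j k) ^ 2 ≤
        2 * (m1 ^ 2 * w x j ^ 2 + m0 ^ 2 * grad w x j k ^ 2) := fun j => by
      nlinarith [hb j, hc j,
        sq_nonneg (pd k (fun z => M z i j) x * w x j - M x i j * grad w x j k)]
    have h5 := Finset.sum_le_sum (s := Finset.univ) fun j _ => h4 j
    rw [← Finset.mul_sum, Finset.sum_add_distrib, ← Finset.mul_sum, ← Finset.mul_sum] at h5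
    unfold nv
    linarith
  have h6 := Finset.sum_le_sum (s := Finset.univ) fun i _ =>
    Finset.sum_le_sum (s := Finset.univ) fun k _ => key i k
  have h7 : 0 ≤ m1 ^ 2 * nv (w x) := mul_nonneg (sq_nonneg _) (nv_nonneg _)
  have h8 : 0 ≤ m0 ^ 2 * nm (grad w x) := mul_nonneg (sq_nonneg _) (nm_nonneg _)
  refine le_trans h6 ?_
  have h9 : ∑ k, ∑ j, grad w x j k ^ 2 = nm (grad w x) := Finset.sum_comm
  simp only [← Finset.mul_sum, Finset.sum_add_distrib, h9, Finset.sum_const, Finset.card_univ,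
    Fintype.card_fin, nsmul_eq_mul]
  push_cast
  linarith

lemma IsTestOn.mulV {Ω : Set E3} {M : E3 → Fin 3 → Fin 3 → ℝ}
    {w : E3 → Fin 3 → ℝ} (hM : ∀ i j x, ContDiffAt ℝ (⊤ : ℕ∞) (fun x => M x i j) x)
    (hw : IsTestOn Ω w) : IsTestOn Ω (mulV M w) :=
  IsTestOn.of_comp fun i => TestS.sum _ fun j => (hw.comp j).mul_left fun x _ => hM i j x

lemma TestS.bounded {Ω : Set E3} {f : E3 → ℝ} (h : TestS Ω f) : ∃ C, 0 ≤ C ∧ ∀ x, |f x| ≤ C := by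
  obtain ⟨C, hC⟩ := h.2.1.exists_bound_of_continuous h.1.continuous
  exact ⟨C, (norm_nonneg _).trans (hC 0), hC⟩

/-- A common bound for finitely many bounded functions. -/
lemma common_bound {ι : Type*} [Fintype ι] {F : ι → E3 → ℝ}
    (h : ∀ i, ∃ C, 0 ≤ C ∧ ∀ x, |F i x| ≤ C) : ∃ C, 0 ≤ C ∧ ∀ i x, |F i x| ≤ C := by
  choose C hC0 hC using h
  exact ⟨∑ i, C i, Finset.sum_nonneg fun i _ => hC0 i, fun i x =>
    (hC i x).trans (Finset.single_le_sum (fun i _ => hC0 i) (Finset.mem_univ i))⟩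

/-! ### Approximation in the energy norm -/

/-- The density `|u|² + |Du|²` of the squared `H¹` norm. -/
def hd (u : E3 → Fin 3 → ℝ) (x : E3) : ℝ := nv (u x) + nm (grad u x)

/-- The density `|u - w|² + |Du - Dw|²` of the squared `H¹` distance. -/
def errD (u w : E3 → Fin 3 → ℝ) (x : E3) : ℝ :=
  nv (fun i => u x i - w x i) + nm (fun i k => grad u x i k - grad w x i k)

lemma errD_nonneg (u w : E3 → Fin 3 → ℝ) (x : E3) : 0 ≤ errD u w x :=
  add_nonneg (nv_nonneg _) (nm_nonneg _)

lemma nv_sub_le_errD (u w : E3 → Fin 3 → ℝ) (x : E3) :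
    nv (fun i => u x i - w x i) ≤ errD u w x := le_add_of_nonneg_right (nm_nonneg _)

lemma nm_sub_le_errD (u w : E3 → Fin 3 → ℝ) (x : E3) :
    nm (fun i k => grad u x i k - grad w x i k) ≤ errD u w x := le_add_of_nonneg_left (nv_nonneg _)

lemma hd_nonneg (u : E3 → Fin 3 → ℝ) (x : E3) : 0 ≤ hd u x :=
  add_nonneg (nv_nonneg _) (nm_nonneg _)

lemma hd_le (u w : E3 → Fin 3 → ℝ) (x : E3) : hd w x ≤ 2 * hd u x + 2 * errD u w x := by
  have h1 := nv_le_two (w x) (u x)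
  have h2 := nm_le_two (grad w x) (grad u x)
  unfold hd errD
  linarith

lemma errD_le (u w : E3 → Fin 3 → ℝ) (x : E3) : errD u w x ≤ 2 * hd u x + 2 * hd w x := by
  have h1 := nv_le_two (fun i => u x i - w x i) (u x)
  have h2 := nm_le_two (fun i k => grad u x i k - grad w x i k) (grad u x)
  simp only [sub_sub_cancel] at h1 h2
  unfold hd errD
  change _ ≤ 2 * nv (u x) + 2 * nv (w x) at h1
  change _ ≤ 2 * nm (grad u x) + 2 * nm (grad w x) at h2
  linarith

lemma IsTestOn.nv_test {Ω : Set E3} {w : E3 → Fin 3 → ℝ} (hw : IsTestOn Ω w) :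
    TestS Ω (fun x => nv (w x)) := by
  unfold nv
  simp only [sq]
  exact TestS.sum _ fun i => (hw.comp i).mul (hw.comp i)

lemma IsTestOn.nm_test {Ω : Set E3} {w : E3 → Fin 3 → ℝ} (hw : IsTestOn Ω w) :
    TestS Ω (fun x => nm (grad w x)) := by
  unfold nm
  simp only [sq]
  exact TestS.sum _ fun i => TestS.sum _ fun k => ((hw.comp i).pd k).mul ((hw.comp i).pd k)

lemma IsTestOn.hd_test {Ω : Set E3} {w : E3 → Fin 3 → ℝ} (hw : IsTestOn Ω w) :
    TestS Ω (hd w) := hw.nv_test.add hw.nm_test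

lemma integrableOn_errD {Ω : Set E3} (hΩ : IsOpen Ω) {u w : E3 → Fin 3 → ℝ}
    (hu : ∀ x ∈ Ω, ∀ i, ContDiffAt ℝ (⊤ : ℕ∞) (fun z => u z i) x)
    (hui : IntegrableOn (hd u) Ω) (hw : IsTestOn Ω w) : IntegrableOn (errD u w) Ω := by
  have hg : IntegrableOn (fun x => 2 * hd u x + 2 * hd w x) Ω :=
    (hui.const_mul 2).add (hw.hd_test.integrable.integrableOn.const_mul 2)
  refine Integrable.mono' hg ?_ (ae_of_all _ fun x => ?_)
  · refine ContinuousOn.aestronglyMeasurable (fun x hx => ContinuousAt.continuousWithinAt ?_)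
      hΩ.measurableSet
    have h1 : ∀ i, ContinuousAt (fun z => u z i - w z i) x := fun i =>
      (hu x hx i).continuousAt.sub ((hw.comp i).sm x).continuousAt
    have h2 : ∀ i k, ContinuousAt (fun z => grad u z i k - grad w z i k) x := fun i k =>
      (pd_smooth k (hu x hx i)).continuousAt.sub (((hw.comp i).pd k).sm x).continuousAt
    unfold errD nv nm
    fun_prop
  · rw [Real.norm_of_nonneg (errD_nonneg _ _ _)]
    exact errD_le u w x

/-- A field in `H̊¹(Ω)` has approximating test fields that coincide with it near a given
interior point `y`. -/
lemma exists_approx {Ω : Set E3} (hΩ : IsOpen Ω) {u : E3 → Fin 3 → ℝ}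
    (hu : ∀ x ∈ Ω, ∀ i, ContDiffAt ℝ (⊤ : ℕ∞) (fun z => u z i) x)
    (hui : IntegrableOn (hd u) Ω) {un : ℕ → E3 → Fin 3 → ℝ} (hun : ∀ n, IsTestOn Ω (un n))
    (hlim : Tendsto (fun n => ∫ x in Ω, errD u (un n) x) atTop (nhds 0))
    {y : E3} {r : ℝ} (hr : 0 < r) (hball : closedBall y (2 * r) ⊆ Ω) :
    ∃ w : ℕ → E3 → Fin 3 → ℝ, (∀ n, IsTestOn Ω (w n)) ∧
      (∀ n, ∀ x ∈ ball y r, w n x = u x) ∧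
      Tendsto (fun n => ∫ x in Ω, errD u (w n) x) atTop (nhds 0) := by
  let ζ : ContDiffBump y := ⟨r, 2 * r, hr, by linarith⟩
  have hζ : TestS Ω (fun x => ζ x) :=
    ⟨ζ.contDiff, ζ.hasCompactSupport, by
      change tsupport (⇑ζ) ⊆ Ω
      rw [ζ.tsupport_eq]; exact hball⟩
  obtain ⟨C, hC0, hC⟩ := common_bound fun k => (hζ.pd k).bounded
  let w : ℕ → E3 → Fin 3 → ℝ := fun n x i => u x i * ζ x + (1 - ζ x) * un n x i
  have hw : ∀ n, IsTestOn Ω (w n) := fun n => IsTestOn.of_comp fun i =>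
    (hζ.mul_left fun x hx => hu x hx i).add
      (((hun n).comp i).mul_left fun x _ => contDiffAt_const.sub (hζ.sm x))
  have hbound : ∀ n, ∀ x ∈ Ω, errD u (w n) x ≤ (2 + 6 * C ^ 2) * errD u (un n) x := by
    intro n x hx
    have hz0 : 0 ≤ 1 - ζ x := sub_nonneg.2 ζ.le_one
    have hz1 : 1 - ζ x ≤ 1 := sub_le_self _ ζ.nonneg
    have hz2 : (1 - ζ x) ^ 2 ≤ 1 := pow_le_one₀ hz0 hz1
    have h1 : ∀ i, (u x i - w n x i) ^ 2 ≤ (u x i - un n x i) ^ 2 := by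
      intro i
      have : u x i - w n x i = (1 - ζ x) * (u x i - un n x i) := by simp only [w]; ring
      rw [this, mul_pow]
      exact mul_le_of_le_one_left (sq_nonneg _) hz2
    have h2 : ∀ i k, (grad u x i k - grad (w n) x i k) ^ 2 ≤
        2 * (grad u x i k - grad (un n) x i k) ^ 2 + 2 * C ^ 2 * (u x i - un n x i) ^ 2 := by
      intro i k
      have du := (hu x hx i).diff
      have dn := (((hun n).comp i).sm x).diff
      have dz := (hζ.sm x).diff
      have e : grad (w n) x i k = grad u x i k * ζ x + u x i * pd k (fun x => ζ x) x
          + (- pd k (fun x => ζ x) x * un n x i + (1 - ζ x) * grad (un n) x i k) := by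
        have dz1 : DifferentiableAt ℝ (fun x => 1 - ζ x) x := (differentiableAt_const _).sub dz
        have e1 : pd k (fun x => 1 - ζ x) x = - pd k (fun x => ζ x) x := by
          rw [pd_sub k (differentiableAt_const _) dz]
          simp [pd]
        simp only [grad, w]
        rw [pd_add k (du.fun_mul dz) (dz1.fun_mul dn), pd_mul k du dz, pd_mul k dz1 dn, e1]
      have e2 : grad u x i k - grad (w n) x i k =
          (1 - ζ x) * (grad u x i k - grad (un n) x i k)
            - pd k (fun x => ζ x) x * (u x i - un n x i) := by rw [e]; ring
      rw [e2]
      have b1 : ((1 - ζ x) * (grad u x i k - grad (un n) x i k)) ^ 2 ≤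
          (grad u x i k - grad (un n) x i k) ^ 2 := by
        rw [mul_pow]; exact mul_le_of_le_one_left (sq_nonneg _) hz2
      have b2 : (pd k (fun x => ζ x) x * (u x i - un n x i)) ^ 2 ≤
          C ^ 2 * (u x i - un n x i) ^ 2 := by
        rw [mul_pow]
        exact mul_le_mul_of_nonneg_right
          (sq_le_sq' (abs_le.1 (hC k x)).1 (abs_le.1 (hC k x)).2) (sq_nonneg _)
      nlinarith [sq_nonneg ((1 - ζ x) * (grad u x i k - grad (un n) x i k)
        + pd k (fun x => ζ x) x * (u x i - un n x i))]
    have s1 : nv (fun i => u x i - w n x i) ≤ nv (fun i => u x i - un n x i) :=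
      Finset.sum_le_sum fun i _ => h1 i
    have s2 : nm (fun i k => grad u x i k - grad (w n) x i k) ≤
        2 * nm (fun i k => grad u x i k - grad (un n) x i k)
          + 6 * C ^ 2 * nv (fun i => u x i - un n x i) := by
      refine (Finset.sum_le_sum fun i _ => Finset.sum_le_sum fun k _ => h2 i k).trans
        (le_of_eq ?_)
      simp only [nm, nv, Fin.sum_univ_three]; ring
    have p1 := nv_nonneg (fun i => u x i - un n x i)
    have p2 := nm_nonneg (fun i k => grad u x i k - grad (un n) x i k)
    have p3 : 0 ≤ C ^ 2 * nm (fun i k => grad u x i k - grad (un n) x i k) := by positivity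
    unfold errD
    nlinarith
  refine ⟨w, hw, ?_, ?_⟩
  · intro n x hx
    ext i
    have : ζ x = 1 := ζ.one_of_mem_closedBall (ball_subset_closedBall hx)
    simp [w, this]
  · have hlim2 := hlim.const_mul (2 + 6 * C ^ 2)
    rw [mul_zero] at hlim2
    refine squeeze_zero (fun n => integral_nonneg fun x => errD_nonneg _ _ _) (fun n => ?_) hlim2
    rw [← integral_const_mul]
    exact setIntegral_mono_on (integrableOn_errD hΩ hu hui (hw n))
      ((integrableOn_errD hΩ hu hui (hun n)).const_mul _) hΩ.measurableSet (hbound n)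

lemma IsTestOn.bf_test {Ω : Set E3} {s t : ℝ} {v φ : E3 → Fin 3 → ℝ}
    (hv : ∀ x ∈ Ω, ∀ i, ContDiffAt ℝ (⊤ : ℕ∞) (fun z => v z i) x) (hφ : IsTestOn Ω φ) :
    TestS Ω (fun x => bf s t (grad v x) (grad φ x)) :=
  TestS.sum _ fun i => TestS.sum _ fun k =>
    ((hφ.comp i).pd k).mul_left fun x hx => smooth_stress (hv x hx) i k

lemma bf_sub_left (s t : ℝ) (P P' Q : Fin 3 → Fin 3 → ℝ) :
    bf s t (fun i k => P i k - P' i k) Q = bf s t P Q - bf s t P' Q := by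
  simp only [bf, stress, Fin.sum_univ_three]
  simp
  ring

/-- Testing the equation `L u = 0` with `M wₙ`, where `wₙ → u`: the energy products
`∫ b(Dwₙ, D(M wₙ))` tend to zero for every smooth matrix field `M` compactly supported in the
region where the equation holds. -/
lemma tendsto_energy {Ω B : Set E3} (hΩ : IsOpen Ω) {s t : ℝ} {u : E3 → Fin 3 → ℝ}
    (hu : ∀ x ∈ Ω, ∀ i, ContDiffAt ℝ (⊤ : ℕ∞) (fun z => u z i) x)
    (hui : IntegrableOn (hd u) Ω) {w : ℕ → E3 → Fin 3 → ℝ} (hw : ∀ n, IsTestOn Ω (w n))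
    (hlim : Tendsto (fun n => ∫ x in Ω, errD u (w n) x) atTop (nhds 0))
    (hL : ∀ x ∈ Ω ∩ B, ∀ i, lame (s + t) u x i = 0)
    {M : E3 → Fin 3 → Fin 3 → ℝ} (hM : ∀ i j, TestS B (fun x => M x i j)) :
    Tendsto (fun n => ∫ x, bf s t (grad (w n) x) (grad (mulV M (w n)) x)) atTop (nhds 0) := by
  have hMw : ∀ n, IsTestOn Ω (mulV M (w n)) := fun n => (hw n).mulV fun i j => (hM i j).sm
  obtain ⟨m0, hm0, hm0'⟩ := common_bound fun p : Fin 3 × Fin 3 => (hM p.1 p.2).bounded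
  obtain ⟨m1, hm1, hm1'⟩ := common_bound fun p : Fin 3 × Fin 3 × Fin 3 =>
    ((hM p.1 p.2.1).pd p.2.2).bounded
  have hwn : ∀ n, ∀ x ∈ Ω, ∀ i, ContDiffAt ℝ (⊤ : ℕ∞) (fun z => w n z i) x :=
    fun n x _ i => ((hw n).comp i).sm x
  set A : ℝ := 54 * (m0 ^ 2 + m1 ^ 2) with hA
  have hA0 : 0 ≤ A := by positivity
  have hgrad : ∀ n x, nm (grad (mulV M (w n)) x) ≤ A * (2 * hd u x + 2 * errD u (w n) x) := by
    intro n x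
    have h1 := nm_grad_mulV_le (fun i j => ((hM i j).sm x).diff)
      (fun j => (((hw n).comp j).sm x).diff) (fun i j => hm0' (i, j) x)
      (fun i j k => hm1' (i, j, k) x)
    have h2 := hd_le u (w n) x
    have h3 : nm (grad (mulV M (w n)) x) ≤ A * hd (w n) x := by
      have := mul_nonneg (sq_nonneg m0) (nv_nonneg (w n x))
      have := mul_nonneg (sq_nonneg m1) (nm_nonneg (grad (w n) x))
      simp only [hd, hA]; linarith
    exact h3.trans (mul_le_mul_of_nonneg_left h2 hA0)
  set H : ℝ := ∫ x in Ω, hd u x with hH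
  have hH0 : 0 ≤ H := integral_nonneg fun x => hd_nonneg u x
  set E : ℕ → ℝ := fun n => ∫ x in Ω, errD u (w n) x with hE
  have hE0 : ∀ n, 0 ≤ E n := fun n => integral_nonneg fun x => errD_nonneg _ _ _
  have hcB := cB_pos s t
  have hEi := fun n => integrableOn_errD hΩ hu hui (hw n)
  have hI : ∀ n, ∀ l : ℝ, 0 < l → |∫ x, bf s t (grad (w n) x) (grad (mulV M (w n)) x)| ≤
      cB s t * (l⁻¹ * E n + l * (A * (2 * H + 2 * E n))) := by
    intro n l hl
    have hz : ∫ x, bf s t (grad u x) (grad (mulV M (w n)) x) = 0 := by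
      rw [weak_form s t hu (hMw n)]
      refine integral_eq_zero_of_ae (ae_of_all _ fun x => Finset.sum_eq_zero fun i _ => ?_)
      by_cases hx : x ∈ Ω
      · by_cases hxB : x ∈ B
        · rw [hL x ⟨hx, hxB⟩ i, zero_mul]
        · have : mulV M (w n) x i = 0 := Finset.sum_eq_zero fun j _ => by
            rw [(hM i j).zero_off hxB, zero_mul]
          rw [this, mul_zero]
      · rw [((hMw n).comp i).zero_off hx, mul_zero]
    have hI1 := ((hMw n).bf_test (s := s) (t := t) (hwn n)).integrable
    have hI2 := ((hMw n).bf_test (s := s) (t := t) hu)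
    have e1 : ∫ x, bf s t (grad (w n) x) (grad (mulV M (w n)) x) =
        - ∫ x in Ω, bf s t (fun i k => grad u x i k - grad (w n) x i k)
            (grad (mulV M (w n)) x) := by
      rw [setIntegral_eq_integral_of_forall_compl_eq_zero]
      · simp only [bf_sub_left]
        rw [integral_sub hI2.integrable hI1, hz]; ring
      · intro x hx
        refine Finset.sum_eq_zero fun i _ => Finset.sum_eq_zero fun k _ => ?_
        have : grad (mulV M (w n)) x i k = 0 := (((hMw n).comp i).pd k).zero_off hx
        rw [this, mul_zero]
    rw [e1, abs_neg]
    have hsum : IntegrableOn (fun x => 2 * hd u x + 2 * errD u (w n) x) Ω :=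
      (hui.const_mul 2).add ((hEi n).const_mul 2)
    have hdom : IntegrableOn (fun x => cB s t * (l⁻¹ * errD u (w n) x
        + l * (A * (2 * hd u x + 2 * errD u (w n) x)))) Ω :=
      (((hEi n).const_mul _).add
        ((hsum.const_mul A).const_mul l)).const_mul _
    have e2 : ∫ x in Ω, cB s t * (l⁻¹ * errD u (w n) x
        + l * (A * (2 * hd u x + 2 * errD u (w n) x))) =
        cB s t * (l⁻¹ * E n + l * (A * (2 * H + 2 * E n))) := by
      rw [integral_const_mul, integral_add ((hEi n).const_mul _)
        ((hsum.const_mul A).const_mul l),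
        integral_const_mul, integral_const_mul, integral_const_mul,
        integral_add (hui.const_mul 2) ((hEi n).const_mul 2), integral_const_mul,
        integral_const_mul]
    rw [← e2, ← Real.norm_eq_abs]
    refine norm_integral_le_of_norm_le hdom (ae_of_all _ fun x => ?_)
    rw [Real.norm_eq_abs]
    refine (abs_bf_le s t _ _ (inv_pos.2 hl)).trans ?_
    rw [inv_inv]
    have a1 := mul_le_mul_of_nonneg_left (nm_sub_le_errD u (w n) x) (inv_pos.2 hl).le
    have a2 := mul_le_mul_of_nonneg_left (hgrad n x) hl.le
    exact mul_le_mul_of_nonneg_left (add_le_add a1 a2) hcB.le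
  rw [Metric.tendsto_atTop]
  intro δ hδ
  -- the weight `l` makes the term without a factor `E n` at most `δ / 2`
  obtain ⟨l, hl, hl2⟩ : ∃ l > 0, cB s t * (l * (A * (2 * H))) < δ / 2 := by
    refine ⟨δ / 2 / (cB s t * (A * (2 * H)) + 1), by positivity, ?_⟩
    have hp : 0 ≤ cB s t * (A * (2 * H)) := by positivity
    rw [show cB s t * (δ / 2 / (cB s t * (A * (2 * H)) + 1) * (A * (2 * H))) =
      δ / 2 * ((cB s t * (A * (2 * H))) / (cB s t * (A * (2 * H)) + 1)) by ring]
    have : cB s t * (A * (2 * H)) / (cB s t * (A * (2 * H)) + 1) < 1 := by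
      rw [div_lt_one (by positivity)]; linarith
    nlinarith
  have ht : Tendsto (fun n => cB s t * (l⁻¹ + l * (A * 2)) * E n) atTop (nhds 0) := by
    simpa using hlim.const_mul (cB s t * (l⁻¹ + l * (A * 2)))
  obtain ⟨N, hN⟩ := (Metric.tendsto_atTop.1 ht) (δ / 2) (by positivity)
  refine ⟨N, fun n hn => ?_⟩
  have h1 := hI n l hl
  have h2 := hN n hn
  rw [Real.dist_eq, sub_zero] at h2 ⊢
  have h3 := (abs_lt.1 h2).2
  nlinarith

/-! ### Cutoff functions adapted to the scale `ρ` -/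

lemma pd_comp_smul (k : Fin 3) (c : ℝ) (f : E3 → ℝ) (x : E3) :
    pd k (fun z => f (c • z)) x = c * pd k f (c • x) := by
  simp only [pd]
  rw [fderiv_comp_smul]
  simp

lemma TestS.comp_smul {U V : Set E3} {f : E3 → ℝ} (hf : TestS U f) {c : ℝ} (hc : c ≠ 0)
    (hUV : ∀ x, c • x ∈ U → x ∈ V) : TestS V (fun z => f (c • z)) := by
  have hs : tsupport (fun z => f (c • z)) ⊆ (fun z => c • z) ⁻¹' tsupport f := by
    refine closure_minimal ?_ ((isClosed_tsupport f).preimage (continuous_const_smul c))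
    intro z hz
    exact subset_tsupport _ hz
  exact ⟨hf.1.comp (contDiff_const_smul c), hf.2.1.comp_smul hc,
    fun x hx => hUV x (hf.2.2 (hs hx))⟩

lemma norm_inv_smul {ρ : ℝ} (hρ : 0 < ρ) (x : E3) : ‖ρ⁻¹ • x‖ = ‖x‖ / ρ := by
  rw [norm_smul, norm_inv, Real.norm_of_nonneg hρ.le]; field_simp

lemma exists_cutoff_ball : ∃ C : ℝ, 0 ≤ C ∧ ∀ ρ : ℝ, 0 < ρ → ∃ η : E3 → ℝ,
    TestS (ball 0 (2 * ρ)) η ∧ (∀ x, ‖x‖ ≤ 5 / 4 * ρ → η x = 1) ∧ (∀ x, |η x| ≤ 1) ∧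
    (∀ k x, |pd k η x| ≤ C / ρ) ∧
    (∀ k x, pd k η x ≠ 0 → 5 / 4 * ρ ≤ ‖x‖ ∧ ‖x‖ ≤ 7 / 4 * ρ) := by
  let f : ContDiffBump (0 : E3) := ⟨5 / 4, 7 / 4, by norm_num, by norm_num⟩
  have hf : TestS (ball 0 2) (fun x => f x) := by
    refine ⟨f.contDiff, f.hasCompactSupport, ?_⟩
    change tsupport (⇑f) ⊆ _
    rw [f.tsupport_eq]
    exact closedBall_subset_ball (by norm_num [f])
  have hf' : ∀ k x, pd k (fun x => f x) x ≠ 0 → 5 / 4 ≤ ‖x‖ ∧ ‖x‖ ≤ 7 / 4 := by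
    intro k x hx
    constructor
    · by_contra! h
      have h1 : (fun x => f x) =ᶠ[nhds x] fun _ => 1 :=
        f.eventuallyEq_one_of_mem_ball (by simpa [f] using h)
      exact hx (by rw [pd_congr k h1]; simp [pd])
    · by_contra! h
      refine hx ?_
      have : x ∉ tsupport (fun x => f x) := by
        change x ∉ tsupport (⇑f)
        rw [f.tsupport_eq]; simpa [f] using h
      rw [pd, fderiv_of_notMem_tsupport ℝ this]; rfl
  obtain ⟨C, hC0, hC⟩ := common_bound fun k => (hf.pd k).bounded
  refine ⟨C, hC0, fun ρ hρ => ⟨fun x => f (ρ⁻¹ • x), ?_, ?_, ?_, ?_, ?_⟩⟩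
  · refine hf.comp_smul (inv_ne_zero hρ.ne') fun x hx => ?_
    rw [mem_ball_zero_iff, norm_inv_smul hρ, div_lt_iff₀ hρ] at hx
    simpa using hx
  · intro x hx
    refine f.one_of_mem_closedBall ?_
    rw [mem_closedBall_zero_iff, norm_inv_smul hρ, div_le_iff₀ hρ]
    exact hx
  · intro x
    rw [abs_of_nonneg f.nonneg]; exact f.le_one
  · intro k x
    rw [pd_comp_smul k ρ⁻¹ (fun x => f x), abs_mul, abs_of_pos (inv_pos.2 hρ), div_eq_inv_mul]
    exact mul_le_mul_of_nonneg_left (hC k _) (inv_pos.2 hρ).le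
  · intro k x hx
    rw [pd_comp_smul k ρ⁻¹ (fun x => f x)] at hx
    have := hf' k _ (right_ne_zero_of_mul hx)
    rwa [norm_inv_smul hρ, le_div_iff₀ hρ, div_le_iff₀ hρ] at this

lemma exists_cutoff_annulus : ∃ C : ℝ, 0 ≤ C ∧ ∀ ρ : ℝ, 0 < ρ → ∃ η : E3 → ℝ,
    TestS {x : E3 | ρ < ‖x‖ ∧ ‖x‖ < 2 * ρ} η ∧
    (∀ x, 5 / 4 * ρ ≤ ‖x‖ → ‖x‖ ≤ 7 / 4 * ρ → η x = 1) ∧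
    (∀ k x, |pd k η x| ≤ C / ρ) := by
  let f : ContDiffBump (0 : E3) := ⟨7 / 4, 15 / 8, by norm_num, by norm_num⟩
  let g : ContDiffBump (0 : E3) := ⟨9 / 8, 5 / 4, by norm_num, by norm_num⟩
  have hs : tsupport (fun x => f x - g x) ⊆ {x : E3 | 9 / 8 ≤ ‖x‖ ∧ ‖x‖ ≤ 15 / 8} := by
    refine closure_minimal ?_ ((isClosed_le continuous_const continuous_norm).inter
      (isClosed_le continuous_norm continuous_const))
    intro x hx
    constructor
    · by_contra! h
      refine hx ?_
      have h1 : f x = 1 := f.one_of_mem_closedBall (by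
        rw [mem_closedBall_zero_iff]; change ‖x‖ ≤ 7 / 4; linarith)
      have h2 : g x = 1 := g.one_of_mem_closedBall (by
        rw [mem_closedBall_zero_iff]; exact h.le)
      simp [h1, h2]
    · by_contra! h
      refine hx ?_
      have h1 : f x = 0 := f.zero_of_le_dist (by rw [dist_zero_right]; exact h.le)
      have h2 : g x = 0 := g.zero_of_le_dist (by
        rw [dist_zero_right]; change 5 / 4 ≤ ‖x‖; linarith)
      simp [h1, h2]
  have hT : TestS {x : E3 | 1 < ‖x‖ ∧ ‖x‖ < 2} (fun x => f x - g x) := by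
    refine ⟨f.contDiff.sub g.contDiff, ?_, ?_⟩
    · exact f.hasCompactSupport.sub g.hasCompactSupport
    · exact hs.trans fun x hx => ⟨by linarith [hx.1], by linarith [hx.2]⟩
  obtain ⟨C, hC0, hC⟩ := common_bound fun k => (hT.pd k).bounded
  refine ⟨C, hC0, fun ρ hρ => ⟨fun x => f (ρ⁻¹ • x) - g (ρ⁻¹ • x), ?_, ?_, ?_⟩⟩
  · refine hT.comp_smul (f := fun x => f x - g x) (inv_ne_zero hρ.ne') fun x hx => ?_
    simpa only [Set.mem_ofPred_eq, norm_inv_smul hρ, div_lt_iff₀ hρ, lt_div_iff₀ hρ, one_mul]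
      using hx
  · intro x h1 h2
    have h3 : f (ρ⁻¹ • x) = 1 := f.one_of_mem_closedBall (by
      rw [mem_closedBall_zero_iff, norm_inv_smul hρ, div_le_iff₀ hρ]; exact h2)
    have h4 : g (ρ⁻¹ • x) = 0 := g.zero_of_le_dist (by
      rw [dist_zero_right, norm_inv_smul hρ, le_div_iff₀ hρ]; exact h1)
    simp [h3, h4]
  · intro k x
    rw [pd_comp_smul k ρ⁻¹ (fun x => f x - g x), abs_mul, abs_of_pos (inv_pos.2 hρ),
      div_eq_inv_mul]
    exact mul_le_mul_of_nonneg_left (hC k _) (inv_pos.2 hρ).le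

/-! ### The fundamental matrix -/

lemma contDiffAt_Phi (α : ℝ) (i j : Fin 3) {z : E3} (hz : z ≠ 0) :
    ContDiffAt ℝ (⊤ : ℕ∞) (fun z => Phi α z i j) z := by
  have hn : ContDiffAt ℝ (⊤ : ℕ∞) (fun z : E3 => ‖z‖) z := contDiffAt_norm ℝ hz
  have hz' : ‖z‖ ≠ 0 := norm_ne_zero_iff.2 hz
  have hc : ∀ i : Fin 3, ContDiffAt ℝ (⊤ : ℕ∞) (fun z : E3 => z i) z := fun i => by fun_prop
  unfold Phi
  exact (contDiffAt_const.mul (hn.inv hz')).mul (contDiffAt_const.add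
    ((contDiffAt_const.mul ((hc i).mul (hc j))).div (hn.pow 2) (pow_ne_zero 2 hz')))

/-- `Φ` is positively homogeneous of degree `-1`. -/
lemma Phi_smul (α : ℝ) (i j : Fin 3) {c : ℝ} (hc : 0 < c) (z : E3) :
    Phi α (c • z) i j = c⁻¹ * Phi α z i j := by
  have hz : c ^ 2 ≠ 0 := by positivity
  simp only [Phi, norm_smul, Real.norm_of_nonneg hc.le, PiLp.smul_apply, smul_eq_mul, mul_inv]
  rw [show α / (α + 2) * (c * z i * (c * z j)) / (c * ‖z‖) ^ 2 =
    c ^ 2 * (α / (α + 2) * (z i * z j)) / (c ^ 2 * ‖z‖ ^ 2) by ring_nf,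
    mul_div_mul_left _ _ hz]
  ring

lemma Phi_bounds (α : ℝ) : ∃ C : ℝ, 0 ≤ C ∧ ∀ z : E3, z ≠ 0 → ∀ i j,
    |Phi α z i j| ≤ C / ‖z‖ ∧ ∀ k, |pd k (fun z => Phi α z i j) z| ≤ C / ‖z‖ ^ 2 := by
  have hne : ∀ z ∈ sphere (0 : E3) 1, z ≠ 0 := fun z hz => ne_of_mem_sphere hz one_ne_zero
  have b0 : ∀ p : Fin 3 × Fin 3, ∃ C, ∀ z ∈ sphere (0 : E3) 1, ‖Phi α z p.1 p.2‖ ≤ C := fun p =>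
    (isCompact_sphere (0 : E3) 1).exists_bound_of_continuousOn fun z hz =>
      (contDiffAt_Phi α p.1 p.2 (hne z hz)).continuousAt.continuousWithinAt
  have b1 : ∀ p : Fin 3 × Fin 3 × Fin 3, ∃ C, ∀ z ∈ sphere (0 : E3) 1,
      ‖pd p.2.2 (fun z => Phi α z p.1 p.2.1) z‖ ≤ C := fun p =>
    (isCompact_sphere (0 : E3) 1).exists_bound_of_continuousOn fun z hz =>
      (pd_smooth _ (contDiffAt_Phi α p.1 p.2.1 (hne z hz))).continuousAt.continuousWithinAt
  choose C0 hC0 using b0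
  choose C1 hC1 using b1
  set C := ∑ p, |C0 p| + ∑ p, |C1 p| with hC
  have s0 : ∀ p, C0 p ≤ C := fun p => by
    have := Finset.single_le_sum (f := fun p => |C0 p|) (fun i _ => abs_nonneg _)
      (Finset.mem_univ p)
    have h2 : 0 ≤ ∑ p, |C1 p| := Finset.sum_nonneg fun _ _ => abs_nonneg _
    linarith [le_abs_self (C0 p)]
  have s1 : ∀ p, C1 p ≤ C := fun p => by
    have := Finset.single_le_sum (f := fun p => |C1 p|) (fun i _ => abs_nonneg _)
      (Finset.mem_univ p)
    have h2 : 0 ≤ ∑ p, |C0 p| := Finset.sum_nonneg fun _ _ => abs_nonneg _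
    linarith [le_abs_self (C1 p)]
  refine ⟨C, by positivity, fun z hz i j => ?_⟩
  have hz' : 0 < ‖z‖ := norm_pos_iff.2 hz
  have hc : 0 < ‖z‖⁻¹ := inv_pos.2 hz'
  have hs : ‖z‖⁻¹ • z ∈ sphere (0 : E3) 1 := by
    rw [mem_sphere_zero_iff_norm, norm_smul, norm_inv, norm_norm, inv_mul_cancel₀ hz'.ne']
  constructor
  · have h := Phi_smul α i j hc z
    rw [inv_inv] at h
    have h2 := (hC0 (i, j) _ hs).trans (s0 _)
    rw [h, Real.norm_eq_abs, abs_mul, abs_of_pos hz'] at h2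
    rw [le_div_iff₀ hz']; linarith
  · intro k
    have h : pd k (fun x => Phi α (‖z‖⁻¹ • x) i j) z =
        ‖z‖⁻¹ * pd k (fun z => Phi α z i j) (‖z‖⁻¹ • z) :=
      pd_comp_smul k ‖z‖⁻¹ (fun z => Phi α z i j) z
    have e : (fun x => Phi α (‖z‖⁻¹ • x) i j) = fun x => ‖z‖ * Phi α x i j := by
      ext x; rw [Phi_smul α i j hc x, inv_inv]
    rw [e, pd_const_mul k _ (contDiffAt_Phi α i j hz).diff] at h
    have h2 := (hC1 (i, j, k) _ hs).trans (s1 _)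
    rw [Real.norm_eq_abs] at h2
    have h3 : pd k (fun z => Phi α z i j) z * ‖z‖ ^ 2 =
        pd k (fun z => Phi α z i j) (‖z‖⁻¹ • z) := by
      have : ‖z‖ * (‖z‖ * pd k (fun z => Phi α z i j) z) =
          ‖z‖ * (‖z‖⁻¹ * pd k (fun z => Phi α z i j) (‖z‖⁻¹ • z)) := by rw [h]
      rw [mul_inv_cancel_left₀ hz'.ne'] at this
      rw [← this]; ring
    rw [le_div_iff₀ (by positivity)]
    dsimp only at h2
    rw [← h3, abs_mul, abs_of_pos (pow_pos hz' 2)] at h2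
    exact h2

/-- A smooth modification of `Φ(· - y)` inside the ball of radius `r` around its pole. -/
lemma exists_kernel (α : ℝ) (y : E3) {r : ℝ} (hr : 0 < r) :
    ∃ K : E3 → Fin 3 → Fin 3 → ℝ,
      (∀ i j x, ContDiffAt ℝ (⊤ : ℕ∞) (fun x => K x i j) x) ∧
      ∀ x, x ∉ ball y r → ∀ i j, K x i j = Phi α (x - y) i j := by
  let χ : ContDiffBump y := ⟨r / 2, r, by positivity, by linarith⟩
  refine ⟨fun x i j => (1 - χ x) * Phi α (x - y) i j, fun i j x => ?_, fun x hx i j => ?_⟩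
  · by_cases hxy : x = y
    · have : (fun x => (1 - χ x) * Phi α (x - y) i j) =ᶠ[nhds x] fun _ => 0 := by
        subst hxy
        filter_upwards [χ.eventuallyEq_one] with z hz
        simp [hz]
      exact contDiffAt_const.congr_of_eventuallyEq this
    · refine (contDiffAt_const.sub χ.contDiffAt).mul ?_
      exact ContDiffAt.comp (g := fun z => Phi α z i j) (f := fun x => x - y) x
        (contDiffAt_Phi α i j (sub_ne_zero.2 hxy)) (contDiffAt_id.sub contDiffAt_const)
  · have : χ x = 0 := χ.zero_of_le_dist (by simpa [χ] using hx)
    simp [this]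

/-! ### Local integrability of the weight -/

lemma TestS.integrable_weight {Ω : Set E3} {f : E3 → ℝ} (hf : TestS Ω f) (y : E3) :
    Integrable (fun x => f x * ‖x - y‖⁻¹) := by
  have hcomp : HasCompactSupport (fun x => f (x + y)) :=
    hf.2.1.comp_homeomorph (Homeomorph.addRight y)
  have hcont : Continuous (fun x => f (x + y)) := hf.1.continuous.comp (continuous_id.add_const y)
  obtain ⟨C, hC⟩ := hcomp.exists_bound_of_continuous hcont
  obtain ⟨R, hR⟩ := hcomp.isCompact.isBounded.subset_ball (0 : E3)
  have hw : IntegrableOn (fun x : E3 => ‖x‖⁻¹) (ball 0 R) := by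
    rw [integrableOn_fun_norm_addHaar volume (f := fun s : ℝ => s⁻¹)]
    have h1 : IntegrableOn (fun s : ℝ => s) (Set.Ioo 0 R) :=
      (continuous_id.integrableOn_Icc (a := 0) (b := R)).mono_set Set.Ioo_subset_Icc_self
    refine h1.congr_fun (fun s hs => ?_) measurableSet_Ioo
    have : s ≠ 0 := hs.1.ne'
    simp only [finrank_euclideanSpace, Fintype.card_fin, smul_eq_mul]
    field_simp
  have h0 : Integrable (fun x => f (x + y) * ‖x‖⁻¹) := by
    rw [← integrableOn_iff_integrable_of_support_subset (s := ball 0 R)]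
    · exact hw.bdd_mul hcont.aestronglyMeasurable (ae_of_all _ hC)
    · intro x hx
      exact hR (subset_tsupport _ (left_ne_zero_of_mul hx))
  simpa using h0.comp_sub_right y

/-! ### Caccioppoli inequality -/

lemma nm_outer (a g : Fin 3 → ℝ) : nm (fun i k => a i * g k) = nv a * nv g := by
  simp only [nm, nv, Fin.sum_univ_three]; ring

lemma nv_le_of_abs_le {g : Fin 3 → ℝ} {C : ℝ} (h : ∀ k, |g k| ≤ C) : nv g ≤ 3 * C ^ 2 := by
  have : ∀ k, g k ^ 2 ≤ C ^ 2 := fun k => sq_le_sq' (abs_le.1 (h k)).1 (abs_le.1 (h k)).2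
  simp only [nv, Fin.sum_univ_three]
  linarith [this 0, this 1, this 2]

/-- The scalar matrix field `f I`. -/
def scalarM (f : E3 → ℝ) (x : E3) (i j : Fin 3) : ℝ := if i = j then f x else 0

lemma mulV_scalarM (f : E3 → ℝ) (w : E3 → Fin 3 → ℝ) :
    mulV (scalarM f) w = fun x i => f x * w x i := by
  ext x i
  simp [mulV, scalarM]

lemma TestS.scalarM {U : Set E3} {f : E3 → ℝ} (hf : TestS U f) (i j : Fin 3) :
    TestS U (fun x => scalarM f x i j) := by
  unfold _root_.scalarM
  split_ifs
  · exact hf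
  · exact TestS.zero

lemma grad_smul {f : E3 → ℝ} {w : E3 → Fin 3 → ℝ} {x : E3} (hf : DifferentiableAt ℝ f x)
    (hw : ∀ j, DifferentiableAt ℝ (fun z => w z j) x) :
    grad (fun x i => f x * w x i) x = fun i k => f x * grad w x i k + w x i * pd k f x := by
  ext i k
  simp only [grad]
  rw [pd_mul k hf (hw i)]; ring

/-- Caccioppoli inequality with the defect `∫ b(Dw, D(η² w))`, which vanishes in the limit when
`w` approximates a solution. -/
lemma caccioppoli {Ω S : Set E3} (hS : MeasurableSet S) {s t : ℝ} (hs : 0 ≤ s) (ht : t ≤ 0)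
    (ht1 : -1 < t) {w : E3 → Fin 3 → ℝ} (hw : IsTestOn Ω w) {η : E3 → ℝ} (hη : TestS S η)
    {C : ℝ} (hC : ∀ k x, |pd k η x| ≤ C) :
    (1 + t) / 2 * ∫ x, η x ^ 2 * nm (grad w x) ≤
      (∫ x, bf s t (grad w x) (grad (mulV (scalarM fun x => η x * η x) w) x)) +
        8 * cB s t ^ 2 / (1 + t) * (3 * C ^ 2) * ∫ x in S, nv (w x) := by
  have ht2 : 0 < 1 + t := by linarith
  have hcB := cB_pos s t
  set D := 8 * cB s t ^ 2 / (1 + t) * (3 * C ^ 2) with hD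
  have hD0 : 0 ≤ D := by positivity
  have hpt : ∀ x, (1 + t) / 2 * (η x ^ 2 * nm (grad w x)) ≤
      bf s t (grad w x) (grad (mulV (scalarM fun x => η x * η x) w) x) +
        D * S.indicator (fun x => nv (w x)) x := by
    intro x
    have dη := (hη.sm x).diff
    have dw : ∀ j, DifferentiableAt ℝ (fun z => w z j) x := fun j => ((hw.comp j).sm x).diff
    rw [mulV_scalarM, grad_smul (dη.fun_mul dη) dw]
    set P := grad w x
    set g : Fin 3 → ℝ := fun k => pd k η x with hg
    have e : bf s t P (fun i k => η x * η x * P i k + w x i * pd k (fun z => η z * η z) x) =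
        η x ^ 2 * bf s t P P
          + 2 * bf s t (fun i k => η x * P i k) (fun i k => w x i * g k) := by
      simp only [pd_mul _ dη dη, bf, stress, Fin.sum_univ_three, hg]
      simp
      ring
    rw [e]
    have h1 := mul_le_mul_of_nonneg_left (bf_coercive hs ht P) (sq_nonneg (η x))
    -- with this weight the gradient part of the cross term is half of the coercive term
    have hl : 0 < (1 + t) / (4 * cB s t) := by positivity
    have h2 := (abs_le.1 (abs_bf_le s t (fun i k => η x * P i k) (fun i k => w x i * g k) hl)).1
    rw [nm_outer] at h2
    have h3 : nm (fun i k => η x * P i k) = η x ^ 2 * nm P := by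
      simp only [nm, Fin.sum_univ_three]; ring
    rw [h3] at h2
    have h4 : cB s t * ((1 + t) / (4 * cB s t) * (η x ^ 2 * nm P) +
        ((1 + t) / (4 * cB s t))⁻¹ * (nv (w x) * nv g)) =
        (1 + t) / 4 * (η x ^ 2 * nm P) + 4 * cB s t ^ 2 / (1 + t) * (nv (w x) * nv g) := by
      field_simp
    rw [h4] at h2
    have h5 : 8 * cB s t ^ 2 / (1 + t) * (nv (w x) * nv g) ≤
        D * S.indicator (fun x => nv (w x)) x := by
      by_cases hx : x ∈ S
      · rw [Set.indicator_of_mem hx, hD]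
        have := mul_le_mul_of_nonneg_left (nv_le_of_abs_le fun k => hC k x) (nv_nonneg (w x))
        have h6 : 0 ≤ 8 * cB s t ^ 2 / (1 + t) := by positivity
        have := mul_le_mul_of_nonneg_left this h6
        calc _ ≤ _ := this
          _ = _ := by ring
      · have : nv g = 0 := Finset.sum_eq_zero fun k _ => by
          have : g k = 0 := (hη.pd k).zero_off hx
          rw [this]; norm_num
        rw [this, Set.indicator_of_notMem hx]; simp
    have h7 : 2 * (4 * cB s t ^ 2 / (1 + t) * (nv (w x) * nv g)) =
      8 * cB s t ^ 2 / (1 + t) * (nv (w x) * nv g) := by ring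
    linarith
  have hMw : IsTestOn Ω (mulV (scalarM fun x => η x * η x) w) :=
    hw.mulV fun i j => ((hη.mul hη).scalarM i j).sm
  have i1 : Integrable (fun x => η x ^ 2 * nm (grad w x)) := by
    simp only [sq]
    exact (hw.nm_test.mul_left fun x _ => (hη.mul hη).sm x).integrable
  have i2 := (hMw.bf_test (s := s) (t := t) (v := w) fun x _ i => (hw.comp i).sm x).integrable
  have i3 : Integrable (fun x => D * S.indicator (fun x => nv (w x)) x) :=
    (hw.nv_test.integrable.indicator hS).const_mul D
  have := integral_mono (i1.const_mul _) (i2.add i3) hpt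
  simp only [Pi.add_apply] at this
  rwa [integral_const_mul, integral_add i2 i3, integral_const_mul, integral_indicator hS] at this

/-! ### The commutator of the energy form with a cutoff -/

lemma bf_cutoff (s t e : ℝ) (P Q : Fin 3 → Fin 3 → ℝ) (a b g : Fin 3 → ℝ) :
    bf s t (fun i k => e * P i k + a i * g k) Q =
      bf s t P (fun i k => e * Q i k + b i * g k) +
        (bf s t (fun i k => a i * g k) Q - bf s t P (fun i k => b i * g k)) := by
  simp only [bf, stress, Fin.sum_univ_three]
  simp
  ring

/-- The constant in `comm_bound`. -/
def cC (s t a b c : ℝ) : ℝ :=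
  cB s t * (3 * c ^ 2 + 54 * b ^ 2 + 54 * a ^ 2 + 1 + 27 * a ^ 2 * c ^ 2)

lemma comm_bound (s t : ℝ) {ρ a b c : ℝ} (hρ : 0 < ρ) {P Q M : Fin 3 → Fin 3 → ℝ}
    {w g : Fin 3 → ℝ} (hg : ∀ k, |g k| ≤ c / ρ) (hM : ∀ i j, |M i j| ≤ a / ρ)
    (hQ : nm Q ≤ 54 * ((b / ρ ^ 2) ^ 2 * nv w + (a / ρ) ^ 2 * nm P)) :
    bf s t (fun i k => w i * g k) Q - bf s t P (fun i k => (∑ j, M i j * w j) * g k) ≤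
      cC s t a b c * (ρ⁻¹ ^ 3 * nv w + ρ⁻¹ * nm P) := by
  have h1 := (abs_le.1 (abs_bf_le s t (fun i k => w i * g k) Q (inv_pos.2 hρ))).2
  have h2 := (abs_le.1 (abs_bf_le s t P (fun i k => (∑ j, M i j * w j) * g k) (inv_pos.2 hρ))).1
  rw [nm_outer w g] at h1
  rw [nm_outer (fun i => ∑ j, M i j * w j) g] at h2
  rw [inv_inv] at h1 h2
  have hw0 := nv_nonneg w
  have hP0 := nm_nonneg P
  have hg' := nv_le_of_abs_le hg
  have hψ : nv (fun i => ∑ j, M i j * w j) ≤ 9 * (a / ρ) ^ 2 * nv w := by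
    have : ∀ i, (∑ j, M i j * w j) ^ 2 ≤ 3 * ((a / ρ) ^ 2 * nv w) := by
      intro i
      have h3 := sq_sum_le_card_mul_sum_sq (s := (Finset.univ : Finset (Fin 3)))
        (f := fun j => M i j * w j)
      refine h3.trans ?_
      simp only [Finset.card_univ, Fintype.card_fin, nv, Finset.mul_sum]
      push_cast
      refine Finset.sum_le_sum fun j _ => ?_
      rw [mul_pow]
      have := mul_le_mul_of_nonneg_right
        (sq_le_sq' (abs_le.1 (hM i j)).1 (abs_le.1 (hM i j)).2) (sq_nonneg (w j))
      linarith
    have h4 := Finset.sum_le_sum (s := Finset.univ) fun i _ => this i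
    refine h4.trans (le_of_eq ?_)
    simp
    ring
  have k1 : ρ⁻¹ * (nv w * nv g) ≤ 3 * c ^ 2 * (ρ⁻¹ ^ 3 * nv w) := by
    have := mul_le_mul_of_nonneg_left (mul_le_mul_of_nonneg_left hg' hw0) (inv_pos.2 hρ).le
    refine this.trans (le_of_eq ?_)
    field_simp
  have k2 : ρ * nm Q ≤ 54 * b ^ 2 * (ρ⁻¹ ^ 3 * nv w) + 54 * a ^ 2 * (ρ⁻¹ * nm P) := by
    refine (mul_le_mul_of_nonneg_left hQ hρ.le).trans (le_of_eq ?_)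
    field_simp
  have k3 : ρ * (nv (fun i => ∑ j, M i j * w j) * nv g) ≤
      27 * a ^ 2 * c ^ 2 * (ρ⁻¹ ^ 3 * nv w) := by
    have := mul_le_mul hψ hg' (nv_nonneg g) (by positivity)
    refine (mul_le_mul_of_nonneg_left this hρ.le).trans (le_of_eq ?_)
    field_simp
    ring
  have p1 : 0 ≤ ρ⁻¹ ^ 3 * nv w := by positivity
  have p2 : 0 ≤ ρ⁻¹ * nm P := by positivity
  have hcB := cB_pos s t
  unfold cC
  rw [mul_assoc]
  refine le_trans (?_ : _ ≤ cB s t * (ρ⁻¹ * (nv w * nv g) + ρ * nm Q + (ρ⁻¹ * nm P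
    + ρ * (nv (fun i => ∑ j, M i j * w j) * nv g)))) (mul_le_mul_of_nonneg_left ?_ hcB.le)
  · linarith
  · have q1 : 0 ≤ (54 * a ^ 2 + 1) * (ρ⁻¹ ^ 3 * nv w) := by positivity
    have q2 : 0 ≤ (3 * c ^ 2 + 54 * b ^ 2 + 27 * a ^ 2 * c ^ 2) * (ρ⁻¹ * nm P) := by positivity
    linarith

lemma lame_congr (α : ℝ) {u v : E3 → Fin 3 → ℝ} {x : E3} (h : v =ᶠ[nhds x] u) (i : Fin 3) :
    lame α v x i = lame α u x i := by
  have hc : ∀ j, (fun z => v z j) =ᶠ[nhds x] fun z => u z j := fun j =>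
    h.mono fun z hz => by simp only [hz]
  have h1 : lap (fun y => v y i) x = lap (fun y => u y i) x :=
    Finset.sum_congr rfl fun k _ => pd_congr k (pd_congr' k (hc i))
  have h2 : divg v =ᶠ[nhds x] divg u := by
    have : ∀ᶠ z in nhds x, ∀ k, pd k (fun y => v y k) z = pd k (fun y => u y k) z :=
      eventually_all.2 fun k => pd_congr' k (hc k)
    filter_upwards [this] with z hz
    exact Finset.sum_congr rfl fun k _ => hz k
  rw [lame, lame, h1, pd_congr i h2]

/-- Upper bound of the weighted energy of `η w` by the defect `∫ b(Dw, D(η² K w))`, which vanishes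
in the limit, and lower-order terms living on the annulus where `∇η ≠ 0`. -/
lemma lameEnergy_le {Ω : Set E3} {s t ρ a0 c r : ℝ} (hρ : 0 < ρ) (hr : 0 < r) (hrρ : r ≤ ρ / 8)
    (ha0 : 0 ≤ a0) (hc : 0 ≤ c)
    (hPhi : ∀ z : E3, z ≠ 0 → ∀ i j, |Phi (s + t) z i j| ≤ a0 / ‖z‖ ∧
      ∀ k, |pd k (fun z => Phi (s + t) z i j) z| ≤ a0 / ‖z‖ ^ 2)
    {y : E3} (hy : ‖y‖ < ρ) {w : E3 → Fin 3 → ℝ} (hw : IsTestOn Ω w)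
    {η η₂ : E3 → ℝ} (hη : TestS (ball 0 (2 * ρ)) η) (hη1 : ∀ x, |η x| ≤ 1)
    (hηd : ∀ k x, |pd k η x| ≤ c / ρ)
    (hηs : ∀ k x, pd k η x ≠ 0 → 5 / 4 * ρ ≤ ‖x‖ ∧ ‖x‖ ≤ 7 / 4 * ρ)
    {S : Set E3} (hS : S = {x : E3 | ρ < ‖x‖ ∧ ‖x‖ < 2 * ρ})
    (hη₂ : TestS S η₂) (hη₂1 : ∀ x, 5 / 4 * ρ ≤ ‖x‖ → ‖x‖ ≤ 7 / 4 * ρ → η₂ x = 1)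
    {K : E3 → Fin 3 → Fin 3 → ℝ} (hK : ∀ i j x, ContDiffAt ℝ (⊤ : ℕ∞) (fun x => K x i j) x)
    (hKΦ : ∀ x, x ∉ ball y r → ∀ i j, K x i j = Phi (s + t) (x - y) i j)
    (hL : ∀ x ∈ ball y r, ∀ i, lame (s + t) (fun x i => η x * w x i) x i = 0) :
    lameEnergy (s + t) (fun x i => η x * w x i) y ≤
      (∫ x, bf s t (grad w x) (grad (mulV (fun x i j => η x * (η x * K x i j)) w) x)) +
        cC s t (4 * a0) (4 * c * a0 + 16 * a0) c * (ρ⁻¹ ^ 3 * (∫ x in S, nv (w x)) +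
          ρ⁻¹ * ∫ x, η₂ x ^ 2 * nm (grad w x)) := by
  set A := cC s t (4 * a0) (4 * c * a0 + 16 * a0) c with hA
  have hA0 : 0 ≤ A := by have := cB_pos s t; rw [hA, cC]; positivity
  have hSm : MeasurableSet S := by
    rw [hS]
    exact ((isOpen_lt continuous_const continuous_norm).inter
      (isOpen_lt continuous_norm continuous_const)).measurableSet
  set M : E3 → Fin 3 → Fin 3 → ℝ := fun x i j => η x * K x i j with hM
  have hMs : ∀ i j x, ContDiffAt ℝ (⊤ : ℕ∞) (fun x => M x i j) x := fun i j x =>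
    (hη.sm x).mul (hK i j x)
  have hψ : IsTestOn Ω (mulV M w) := hw.mulV hMs
  have hvs : ∀ x i, ContDiffAt ℝ (⊤ : ℕ∞) (fun z => η z * w z i) x := fun x i =>
    (hη.sm x).mul ((hw.comp i).sm x)
  have hψ' : mulV (fun x i j => η x * (η x * K x i j)) w = fun x i => η x * mulV M w x i := by
    ext x i
    simp only [mulV, hM, Finset.mul_sum, mul_assoc]
  have e1 : lameEnergy (s + t) (fun x i => η x * w x i) y =
      ∫ x, ∑ i, lame (s + t) (fun x i => η x * w x i) x i * mulV M w x i := by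
    unfold lameEnergy
    congr 1; ext x
    refine Finset.sum_congr rfl fun i _ => ?_
    by_cases hx : x ∈ ball y r
    · simp [hL x hx i]
    · simp only [mulV, hM, Finset.mul_sum, hKΦ x hx]
      exact Finset.sum_congr rfl fun j _ => by ring
  rw [e1, ← weak_form s t (fun x _ => hvs x) hψ, hψ']
  have hpt : ∀ x, bf s t (grad (fun x i => η x * w x i) x) (grad (mulV M w) x) ≤
      bf s t (grad w x) (grad (fun x i => η x * mulV M w x i) x) +
        A * (ρ⁻¹ ^ 3 * S.indicator (fun x => nv (w x)) x +
          ρ⁻¹ * (η₂ x ^ 2 * nm (grad w x))) := by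
    intro x
    have dη := (hη.sm x).diff
    have dw : ∀ j, DifferentiableAt ℝ (fun z => w z j) x := fun j => ((hw.comp j).sm x).diff
    have dM : ∀ i j, DifferentiableAt ℝ (fun z => M z i j) x := fun i j => (hMs i j x).diff
    rw [grad_smul dη dw, grad_smul dη fun j => ((hψ.comp j).sm x).diff,
      bf_cutoff s t (η x) (grad w x) (grad (mulV M w) x) (w x) (mulV M w x)]
    refine add_le_add le_rfl ?_
    by_cases hg : ∀ k, pd k η x = 0
    · have hz : bf s t (fun i k => w x i * pd k η x) (grad (mulV M w) x)
          - bf s t (grad w x) (fun i k => mulV M w x i * pd k η x) = 0 := by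
        simp [hg, bf, stress]
      rw [hz]
      have p1 : 0 ≤ S.indicator (fun x => nv (w x)) x :=
        Set.indicator_nonneg (fun z _ => nv_nonneg _) x
      have p2 := nm_nonneg (grad w x)
      positivity
    · push Not at hg
      obtain ⟨k₀, hk₀⟩ := hg
      obtain ⟨hx1, hx2⟩ := hηs k₀ x hk₀
      have hxS : x ∈ S := by
        rw [hS]; exact ⟨by linarith, by linarith⟩
      rw [Set.indicator_of_mem hxS, hη₂1 x hx1 hx2, one_pow, one_mul]
      have hdist : ρ / 4 ≤ ‖x - y‖ := by
        have := norm_sub_norm_le x y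
        linarith
      have hpos : 0 < ‖x - y‖ := by linarith
      have hxy : x - y ≠ 0 := norm_pos_iff.1 hpos
      have hKe : ∀ i j, (fun z => K z i j) =ᶠ[nhds x] fun z => Phi (s + t) (z - y) i j := by
        intro i j
        have ho : (closedBall y r)ᶜ ∈ nhds x := by
          refine isClosed_closedBall.isOpen_compl.mem_nhds ?_
          rw [Set.mem_compl_iff, mem_closedBall, dist_eq_norm]
          linarith
        filter_upwards [ho] with z hz
        exact hKΦ z (fun hz' => hz (ball_subset_closedBall hz')) i j
      have hK0 : ∀ i j, |K x i j| ≤ 4 * a0 / ρ := by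
        intro i j
        rw [(hKe i j).eq_of_nhds]
        refine ((hPhi _ hxy i j).1).trans ?_
        rw [div_le_div_iff₀ hpos hρ]
        nlinarith
      have hK1 : ∀ i j k, |pd k (fun z => K z i j) x| ≤ 16 * a0 / ρ ^ 2 := by
        intro i j k
        have e : pd k (fun z => Phi (s + t) (z - y) i j) x =
            pd k (fun z => Phi (s + t) z i j) (x - y) := by
          simp only [pd]
          rw [fderiv_comp_sub (f := fun z => Phi (s + t) z i j)]
        rw [pd_congr k (hKe i j), e]
        refine ((hPhi _ hxy i j).2 k).trans ?_
        rw [div_le_div_iff₀ (by positivity) (by positivity)]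
        have : ρ ^ 2 ≤ 16 * ‖x - y‖ ^ 2 := by nlinarith
        nlinarith
      have hM0 : ∀ i j, |M x i j| ≤ 4 * a0 / ρ := by
        intro i j
        simp only [hM, abs_mul]
        calc _ ≤ 1 * (4 * a0 / ρ) := mul_le_mul (hη1 x) (hK0 i j) (abs_nonneg _) zero_le_one
          _ = _ := one_mul _
      have hM1 : ∀ i j k, |pd k (fun z => M z i j) x| ≤ (4 * c * a0 + 16 * a0) / ρ ^ 2 := by
        intro i j k
        simp only [hM]
        rw [pd_mul k dη (hK i j x).diff]
        refine (abs_add_le _ _).trans ?_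
        rw [abs_mul, abs_mul]
        have b1 := mul_le_mul (hηd k x) (hK0 i j) (abs_nonneg _) (by positivity)
        have b2 := mul_le_mul (hη1 x) (hK1 i j k) (abs_nonneg _) zero_le_one
        refine (add_le_add b1 b2).trans (le_of_eq ?_)
        field_simp
      exact comm_bound s t hρ (fun k => hηd k x) hM0 (nm_grad_mulV_le dM dw hM0 hM1)
  have hηψ : IsTestOn Ω (fun x i => η x * mulV M w x i) := IsTestOn.of_comp fun i =>
    (hψ.comp i).mul_left fun x _ => hη.sm x
  have i0 := (hψ.bf_test (s := s) (t := t) (v := fun x i => η x * w x i)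
    fun x _ i => hvs x i).integrable
  have i1 := (hηψ.bf_test (s := s) (t := t) (v := w) fun x _ i => (hw.comp i).sm x).integrable
  have i2 : Integrable (fun x => ρ⁻¹ ^ 3 * S.indicator (fun x => nv (w x)) x) :=
    (hw.nv_test.integrable.indicator hSm).const_mul _
  have i3 : Integrable (fun x => ρ⁻¹ * (η₂ x ^ 2 * nm (grad w x))) := by
    simp only [sq]
    exact (hw.nm_test.mul_left fun x _ => (hη₂.mul hη₂).sm x).integrable.const_mul _
  have i4 : Integrable (fun x => A * (ρ⁻¹ ^ 3 * S.indicator (fun x => nv (w x)) x +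
          ρ⁻¹ * (η₂ x ^ 2 * nm (grad w x)))) := (i2.add i3).const_mul A
  have := integral_mono i0 (i1.add i4) hpt
  simp only [Pi.add_apply] at this
  rwa [integral_add i1 i4, integral_const_mul, integral_add i2 i3, integral_const_mul,
    integral_const_mul, integral_indicator hSm] at this

/-! ### Comparison of the approximants with the limit, and the estimate -/

lemma annulus_integral_le {Ω S : Set E3} (hΩ : IsOpen Ω) (hS : MeasurableSet S)
    {u w : E3 → Fin 3 → ℝ}
    (hu : ∀ x ∈ Ω, ∀ i, ContDiffAt ℝ (⊤ : ℕ∞) (fun z => u z i) x)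
    (hui : IntegrableOn (hd u) Ω) (hw : IsTestOn Ω w) :
    ∫ x in S, nv (w x) ≤ 2 * (∫ x in Ω ∩ S, nv (u x)) + 2 * ∫ x in Ω, errD u w x := by
  have hEi := integrableOn_errD hΩ hu hui hw
  have hnu : IntegrableOn (fun x => nv (u x)) Ω := by
    refine Integrable.mono' hui ?_ (ae_of_all _ fun x => ?_)
    · refine ContinuousOn.aestronglyMeasurable (fun x hx => ContinuousAt.continuousWithinAt ?_)
        hΩ.measurableSet
      have h1 : ∀ i, ContinuousAt (fun z => u z i) x := fun i => (hu x hx i).continuousAt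
      unfold nv
      fun_prop
    · rw [Real.norm_of_nonneg (nv_nonneg _)]
      exact le_add_of_nonneg_right (nm_nonneg _)
  have h1 : ∫ x in S, nv (w x) = ∫ x in Ω ∩ S, nv (w x) := by
    apply setIntegral_eq_of_subset_of_forall_sdiff_eq_zero hS Set.inter_subset_right
    intro x hx
    exact hw.nv_test.zero_off fun h => hx.2 ⟨h, hx.1⟩
  have hi1 : IntegrableOn (fun x => 2 * nv (u x)) (Ω ∩ S) :=
    (hnu.mono_set Set.inter_subset_left).const_mul 2
  have hi2 : IntegrableOn (fun x => 2 * errD u w x) (Ω ∩ S) :=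
    (hEi.mono_set Set.inter_subset_left).const_mul 2
  have h2 : ∫ x in Ω ∩ S, nv (w x) ≤ ∫ x in Ω ∩ S, (2 * nv (u x) + 2 * errD u w x) := by
    refine integral_mono hw.nv_test.integrable.integrableOn (hi1.add hi2) fun x => ?_
    have a := nv_le_two (w x) (u x)
    have b := nv_sub_le_errD u w x
    change nv (w x) ≤ 2 * nv (u x) + 2 * errD u w x
    linarith
  rw [integral_add hi1 hi2, integral_const_mul, integral_const_mul] at h2
  have h3 : ∫ x in Ω ∩ S, errD u w x ≤ ∫ x in Ω, errD u w x :=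
    setIntegral_mono_set hEi (ae_of_all _ fun x => errD_nonneg u w x)
      Set.inter_subset_left.eventuallyLE
  linarith

/-- The weight `|x - y|⁻¹` is harmless in the comparison of `u` with an approximant `w` because
the two fields agree near `y`. -/
lemma weighted_integral_le {Ω B : Set E3} (hΩ : IsOpen Ω)
    {u w : E3 → Fin 3 → ℝ}
    (hu : ∀ x ∈ Ω, ∀ i, ContDiffAt ℝ (⊤ : ℕ∞) (fun z => u z i) x)
    (hui : IntegrableOn (hd u) Ω) (hw : IsTestOn Ω w) {y : E3} {r : ℝ} (hr : 0 < r)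
    (hwu : ∀ x ∈ ball y r, w x = u x) :
    ∫ x in Ω ∩ B, nm (grad u x) * ‖x - y‖⁻¹ ≤
      2 * (∫ x in Ω ∩ B, nm (grad w x) * ‖x - y‖⁻¹) + 2 * r⁻¹ * ∫ x in Ω, errD u w x := by
  have hEi := integrableOn_errD hΩ hu hui hw
  have hi1 : IntegrableOn (fun x => 2 * (nm (grad w x) * ‖x - y‖⁻¹)) (Ω ∩ B) :=
    (hw.nm_test.integrable_weight y).integrableOn.const_mul 2
  have hi2 : IntegrableOn (fun x => 2 * r⁻¹ * errD u w x) (Ω ∩ B) :=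
    (hEi.mono_set Set.inter_subset_left).const_mul _
  have h2 : ∫ x in Ω ∩ B, nm (grad u x) * ‖x - y‖⁻¹ ≤
      ∫ x in Ω ∩ B, (2 * (nm (grad w x) * ‖x - y‖⁻¹) + 2 * r⁻¹ * errD u w x) := by
    refine integral_mono_of_nonneg
      (ae_of_all _ fun x => mul_nonneg (nm_nonneg _) (inv_nonneg.2 (norm_nonneg _)))
      (hi1.add hi2) (ae_of_all _ fun x => ?_)
    change nm (grad u x) * ‖x - y‖⁻¹ ≤ 2 * (nm (grad w x) * ‖x - y‖⁻¹) + 2 * r⁻¹ * errD u w x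
    have hE := errD_nonneg u w x
    have hN := nm_nonneg (grad w x)
    have hq : 0 ≤ ‖x - y‖⁻¹ := inv_nonneg.2 (norm_nonneg _)
    have hri : 0 < r⁻¹ := inv_pos.2 hr
    by_cases hx : x ∈ ball y r
    · have : grad u x = grad w x := by
        ext i k
        refine pd_congr k ?_
        filter_upwards [isOpen_ball.mem_nhds hx] with z hz
        rw [hwu z hz]
      rw [this]
      have h1 := mul_nonneg hN hq
      have h2 := mul_nonneg hri.le hE
      nlinarith
    · have hxr : r ≤ ‖x - y‖ := by
        rw [mem_ball, dist_eq_norm, not_lt] at hx; exact hx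
      have hle : ‖x - y‖⁻¹ ≤ r⁻¹ := inv_anti₀ hr hxr
      have a := nm_le_two (grad u x) (grad w x)
      have b := nm_sub_le_errD u w x
      have e : nm (fun i k => grad w x i k - grad u x i k) =
          nm (fun i k => grad u x i k - grad w x i k) := by
        simp only [nm]
        exact Finset.sum_congr rfl fun i _ => Finset.sum_congr rfl fun k _ => by ring
      rw [e] at a
      have c1 : nm (grad u x) ≤ 2 * nm (grad w x) + 2 * errD u w x := by linarith
      have c2 := mul_le_mul_of_nonneg_right c1 hq
      have c3 := mul_le_mul_of_nonneg_left hle hE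
      nlinarith
  rw [integral_add hi1 hi2, integral_const_mul, integral_const_mul] at h2
  have h3 : ∫ x in Ω ∩ B, errD u w x ≤ ∫ x in Ω, errD u w x :=
    setIntegral_mono_set hEi (ae_of_all _ fun x => errD_nonneg u w x)
      Set.inter_subset_left.eventuallyLE
  have h4 := mul_le_mul_of_nonneg_left h3 (show 0 ≤ 2 * r⁻¹ by positivity)
  linarith

lemma weighted_integral_cutoff_le {Ω A : Set E3} {ρ : ℝ} (hρ : 0 < ρ)
    (hA : MeasurableSet A) (hAρ : A ⊆ ball 0 ρ)
    {w : E3 → Fin 3 → ℝ} {η : E3 → ℝ} (hη1 : ∀ x, ‖x‖ ≤ 5 / 4 * ρ → η x = 1)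
    (hv : IsTestOn Ω (fun x i => η x * w x i)) (y : E3) :
    ∫ x in A, nm (grad w x) * ‖x - y‖⁻¹ ≤
      ∫ x, nm (grad (fun x i => η x * w x i) x) * ‖x - y‖⁻¹ := by
  have h1 : ∫ x in A, nm (grad w x) * ‖x - y‖⁻¹ =
      ∫ x in A, nm (grad (fun x i => η x * w x i) x) * ‖x - y‖⁻¹ := by
    refine setIntegral_congr_fun hA fun x hx => ?_
    have : grad w x = grad (fun x i => η x * w x i) x := by
      ext i k
      refine pd_congr k ?_
      filter_upwards [isOpen_ball.mem_nhds (hAρ hx)] with z hz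
      have hz' : ‖z‖ < ρ := by simpa using hz
      rw [hη1 z (by linarith), one_mul]
    simp only [this]
  rw [h1]
  exact setIntegral_le_integral (hv.nm_test.integrable_weight y)
    (ae_of_all _ fun x => mul_nonneg (nm_nonneg _) (inv_nonneg.2 (norm_nonneg _)))

/-- The real arithmetic of the final step: absorb the annular gradient term `J` by the
Caccioppoli inequality and divide by the constant of positive definiteness. -/
lemma combine_bounds {c₀ κ A B ρ r U W WU G J I1 I2 m E : ℝ} (hc₀ : 0 < c₀) (hκ : 0 < κ)
    (hA : 0 ≤ A) (hB : 0 ≤ B) (hρ : 0 < ρ) (hU : 0 ≤ U) (hW : 0 ≤ W)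
    (hq : 1 / 2 * U + c₀ * W ≤ I1 + A * (ρ⁻¹ ^ 3 * G + ρ⁻¹ * J))
    (hJ : κ / 2 * J ≤ I2 + B * ρ⁻¹ ^ 2 * G)
    (hG : G ≤ 2 * (ρ ^ 3 * m) + 2 * E)
    (hWU : WU ≤ 2 * W + 2 * r⁻¹ * E) :
    U + WU ≤ (2 + 2 / c₀) * (I1 + A * (2 / κ) * ρ⁻¹ * I2 +
      (A + A * (2 / κ) * B) * (2 * m + 2 * ρ⁻¹ ^ 3 * E)) + 2 * r⁻¹ * E := by
  have hi : 0 < ρ⁻¹ := inv_pos.2 hρ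
  have hJ' : J ≤ 2 / κ * (I2 + B * ρ⁻¹ ^ 2 * G) := by
    have := mul_le_mul_of_nonneg_left hJ (show 0 ≤ 2 / κ by positivity)
    have e : 2 / κ * (κ / 2 * J) = J := by field_simp
    linarith
  have hG' : ρ⁻¹ ^ 3 * G ≤ 2 * m + 2 * ρ⁻¹ ^ 3 * E := by
    have := mul_le_mul_of_nonneg_left hG (show 0 ≤ ρ⁻¹ ^ 3 by positivity)
    have e : ρ⁻¹ ^ 3 * (2 * (ρ ^ 3 * m) + 2 * E) = 2 * m + 2 * ρ⁻¹ ^ 3 * E := by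
      field_simp
    linarith
  have hAκ : 0 ≤ A * (2 / κ) := by positivity
  set X := I1 + A * (2 / κ) * ρ⁻¹ * I2 +
      (A + A * (2 / κ) * B) * (2 * m + 2 * ρ⁻¹ ^ 3 * E) with hX
  have h1 : 1 / 2 * U + c₀ * W ≤ X := by
    have a1 := mul_le_mul_of_nonneg_left hJ' (show 0 ≤ A * ρ⁻¹ by positivity)
    have a2 := mul_le_mul_of_nonneg_left hG' (show 0 ≤ A + A * (2 / κ) * B by positivity)
    have e : A * ρ⁻¹ * (2 / κ * (I2 + B * ρ⁻¹ ^ 2 * G)) =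
      A * (2 / κ) * ρ⁻¹ * I2 + A * (2 / κ) * B * (ρ⁻¹ ^ 3 * G) := by ring
    rw [e] at a1
    linarith
  have hU2 : U ≤ 2 * X := by nlinarith
  have hW2 : W ≤ X / c₀ := by rw [le_div_iff₀ hc₀]; nlinarith
  have e : (2 + 2 / c₀) * X = 2 * X + 2 * (X / c₀) := by ring
  linarith

/-- Under (QPD): if `Lu = 0` on `Ω ∩ B_{2ρ}` then for all `y ∈ Ω ∩ B_ρ`,
`|u(y)|² + ∫_{Ω∩B_ρ} |Du(x)|²/|x-y| dx ≤ c m_ρ(u)`, with `c` depending only on `α, c₀`. -/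
theorem lame_local_pointwise_estimate
    (α : ℝ) (hα : -1 < α) (c₀ : ℝ) (hc₀ : 0 < c₀) (hQPD : QPDhyp α c₀) :
    ∃ c > (0 : ℝ), ∀ Ω : Set E3, IsOpen Ω → ∀ ρ : ℝ, 0 < ρ →
      ∀ u : E3 → Fin 3 → ℝ, MemH10 Ω u →
      (∀ x ∈ Ω ∩ ball (0 : E3) (2 * ρ), ∀ i, lame α u x i = 0) →
      ∀ y ∈ Ω ∩ ball (0 : E3) ρ,
        (∑ i, (u y i) ^ 2) +
            (∫ x in Ω ∩ ball (0 : E3) ρ,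
              (∑ i, ∑ k, (pd k (fun z => u z i) x) ^ 2) * ‖x - y‖⁻¹) ≤
          c * mRho Ω ρ u := by
  obtain ⟨s, t, hs, ht, ht1, hst⟩ : ∃ s t : ℝ, 0 ≤ s ∧ t ≤ 0 ∧ -1 < t ∧ s + t = α :=
    ⟨max α 0, min α 0, le_max_right _ _, min_le_right _ _, lt_min hα (by norm_num),
      by rw [max_add_min, add_zero]⟩
  subst hst
  obtain ⟨a0, ha0, hPhi⟩ := Phi_bounds (s + t)
  obtain ⟨c, hc, hcut⟩ := exists_cutoff_ball
  obtain ⟨C2, hC2, hcut2⟩ := exists_cutoff_annulus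
  have hκ : 0 < 1 + t := by linarith
  have hcB := cB_pos s t
  obtain ⟨A, hA⟩ : ∃ A, A = cC s t (4 * a0) (4 * c * a0 + 16 * a0) c := ⟨_, rfl⟩
  have hA0 : 0 ≤ A := by rw [hA, cC]; positivity
  obtain ⟨B, hB⟩ : ∃ B, B = 8 * cB s t ^ 2 / (1 + t) * (3 * C2 ^ 2) := ⟨_, rfl⟩
  have hB0 : 0 ≤ B := by rw [hB]; positivity
  refine ⟨(2 + 2 / c₀) * ((A + A * (2 / (1 + t)) * B) * 2) + 1, by positivity, ?_⟩
  intro Ω hΩ ρ hρ u hu0 hLu y hy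
  obtain ⟨hsm, hui, un, hun, hlim0⟩ := hu0
  have hu : ∀ x ∈ Ω, ∀ i, ContDiffAt ℝ (⊤ : ℕ∞) (fun z => u z i) x := fun x hx i =>
    contDiffAt_pi.1 (hsm.contDiffAt (hΩ.mem_nhds hx)) i
  have hlim : Tendsto (fun n => ∫ x in Ω, errD u (un n) x) atTop (nhds 0) := by
    refine hlim0.congr fun n => setIntegral_congr_fun hΩ.measurableSet fun x hx => ?_
    simp only [errD, nv, nm, grad]
    congr 1
    refine Finset.sum_congr rfl fun i _ => Finset.sum_congr rfl fun k _ => ?_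
    rw [pd_sub k (hu x hx i).diff (((hun n).comp i).sm x).diff]
  have hyρ : ‖y‖ < ρ := by simpa using hy.2
  obtain ⟨r, hr, hrρ, hball⟩ : ∃ r > 0, r ≤ ρ / 8 ∧ closedBall y (2 * r) ⊆ Ω := by
    obtain ⟨ε, hε, hεΩ⟩ := nhds_basis_closedBall.mem_iff.1 (hΩ.mem_nhds hy.1)
    refine ⟨min (ε / 2) (ρ / 8), by positivity, min_le_right _ _, ?_⟩
    refine (closedBall_subset_closedBall ?_).trans hεΩ
    have := min_le_left (ε / 2) (ρ / 8)
    linarith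
  obtain ⟨w, hw, hwu, hwlim⟩ := exists_approx hΩ hu hui hun hlim hr hball
  obtain ⟨η, hη, hη1, hηb, hηd, hηs⟩ := hcut ρ hρ
  obtain ⟨η₂, hη₂, hη₂1, hη₂d⟩ := hcut2 ρ hρ
  obtain ⟨K, hK, hKΦ⟩ := exists_kernel (s + t) y hr
  obtain ⟨S, hS⟩ : ∃ S : Set E3, S = {x : E3 | ρ < ‖x‖ ∧ ‖x‖ < 2 * ρ} := ⟨_, rfl⟩
  rw [← hS] at hη₂
  have hSm : MeasurableSet S := by
    rw [hS]
    exact ((isOpen_lt continuous_const continuous_norm).inter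
      (isOpen_lt continuous_norm continuous_const)).measurableSet
  have hSB : S ⊆ ball 0 (2 * ρ) := by
    rw [hS]; intro x hx; simpa using hx.2
  have hI1 := tendsto_energy (s := s) (t := t) hΩ hu hui hw hwlim hLu
    (M := fun x i j => η x * (η x * K x i j)) fun i j => by
      have := (hη.mul_left (fun x _ => hη.sm x)).mul_left fun x _ => hK i j x
      refine (congrArg (TestS (ball 0 (2 * ρ))) ?_).mp this
      funext x; ring
  have hI2 := tendsto_energy (s := s) (t := t) hΩ hu hui hw hwlim hLu
    (M := scalarM fun x => η₂ x * η₂ x) ((hη₂.mul hη₂).mono hSB).scalarM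
  have hm : ρ ^ 3 * mRho Ω ρ u = ∫ x in Ω ∩ S, nv (u x) := by
    rw [mRho, ← mul_assoc, mul_inv_cancel₀ (by positivity), one_mul, hS]
    rfl
  have hm0 : 0 ≤ mRho Ω ρ u :=
    mul_nonneg (by positivity) (integral_nonneg fun x => nv_nonneg _)
  have hv : ∀ n, IsTestOn Ω (fun x i => η x * w n x i) := fun n => by
    rw [← mulV_scalarM]
    exact (hw n).mulV fun i j => (hη.scalarM i j).sm
  have hT := (((hI1.add (hI2.const_mul (A * (2 / (1 + t)) * ρ⁻¹))).add
    (((tendsto_const_nhds (x := 2 * mRho Ω ρ u)).add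
      (hwlim.const_mul (2 * ρ⁻¹ ^ 3))).const_mul (A + A * (2 / (1 + t)) * B))).const_mul
    (2 + 2 / c₀)).add (hwlim.const_mul (2 * r⁻¹))
  refine le_trans (ge_of_tendsto' hT fun n => ?_)
    (by simp only [mul_zero, add_zero, zero_add]; linarith)
  have hηy : η y = 1 := hη1 y (by linarith)
  have hL : ∀ x ∈ ball y r, ∀ i, lame (s + t) (fun x i => η x * w n x i) x i = 0 := by
    intro x hx i
    have hxr : ‖x - y‖ < r := by simpa [dist_eq_norm] using hx
    have hxρ : ‖x‖ < 5 / 4 * ρ := by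
      have := norm_le_norm_add_norm_sub' x y
      linarith
    have hev : (fun x i => η x * w n x i) =ᶠ[nhds x] u := by
      filter_upwards [isOpen_ball.mem_nhds hx,
        (isOpen_lt continuous_norm continuous_const).mem_nhds hxρ] with z hz hz2
      funext j
      rw [hη1 z (le_of_lt hz2), one_mul, hwu n z hz]
    rw [lame_congr _ hev]
    refine hLu x ⟨hball (ball_subset_closedBall (ball_subset_ball (by linarith) hx)), ?_⟩ i
    rw [mem_ball_zero_iff]; linarith
  have q1 := hQPD _ ⟨(hv n).1, (hv n).2.1, Set.subset_univ _⟩ y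
  have q2 := lameEnergy_le hρ hr hrρ ha0 hc hPhi hyρ (hw n) hη hηb hηd hηs hS hη₂ hη₂1 hK hKΦ hL
  have q3 := caccioppoli hSm hs ht ht1 (hw n) hη₂ hη₂d
  have q4 := annulus_integral_le hΩ hSm hu hui (hw n)
  have q5 := weighted_integral_le (B := ball 0 ρ) hΩ hu hui (hw n) hr (hwu n)
  have q6 := weighted_integral_cutoff_le hρ (hΩ.measurableSet.inter measurableSet_ball)
    Set.inter_subset_right hη1 (hv n) y
  rw [← hm] at q4
  rw [← hA] at q2
  have e3 : 8 * cB s t ^ 2 / (1 + t) * (3 * (C2 / ρ) ^ 2) = B * ρ⁻¹ ^ 2 := by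
    rw [hB, div_pow, inv_pow]; ring
  rw [e3] at q3
  have eU : ∑ i, (η y * w n y i) ^ 2 = ∑ i, (u y i) ^ 2 := by
    simp only [hηy, one_mul, hwu n y (mem_ball_self hr)]
  simp only [eU] at q1
  exact combine_bounds hc₀ hκ hA0 hB0 hρ (nv_nonneg (u y))
    (integral_nonneg fun x => mul_nonneg (nm_nonneg _) (inv_nonneg.2 (norm_nonneg _)))
    (q1.trans q2) q3 q4 (q5.trans (by gcongr; exact q6))
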